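/- arXiv:1707.09550 — 2 statements merged into one kernel-verified Lean document; each statement's English description precedes it below -/
import Mathlib

section
/- Let s ∈ ℕ∪{0}, let j be an index with data (λ_j, a_j, b_j, c_j, d_j) and p_j := a_j+b_j+c_j+d_j ≥ 2, and assume a_j ≥ 1. Set M_{1,*} := −(1/2) λ_j a_j (ik_{(1,p_j−1)}) (ik_{p_j})^{s+1} (ik_{p_j+1})^{s+1} D_{a_j−1,b_j,c_j} M_H^{(p_j)} M_NZ^{(p_j)}. Then there exists C > 0 (depending on s, p_j, λ_j and the constant C₀ in M_H) such that for all real-valued f, g ∈ C^∞(𝕋): |Γ^{(p_j)}(λ_j a_j (ik_{p_j})^{s+2}(ik_{p_j+1})^{s+1} D_{a_j−1,b_j,c_j}; f,…,f,g,g) − Γ^{(p_j)}(M_{1,*}; f,…,f,g,g)| ≤ C ‖f‖_{H⁴}^{p_j−2} ‖f‖_{H⁸} ‖g‖_{H^s}², where the first p_j−1 arguments are f and the last two are g. -/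
/- Lemma lem_ga1: normal form reduction for the D_{a-1,b,c} part of the energy estimate. -/

namespace FifthOrderStmt16

open scoped NNReal Classical

/-- Maximum of a nonnegative real-valued family over a finset (`0` if the finset is empty). -/
noncomputable def fmax {α : Type*} (s : Finset α) (f : α → ℝ) : ℝ :=
  ((s.sup fun i => Real.toNNReal (f i) : ℝ≥0) : ℝ)

/-- Fourier coefficient of a `2π`-periodic function `f : ℝ → ℂ`:
`f̂(k) = (1/2π) ∫_0^{2π} f(x) e^{-ikx} dx`. -/
noncomputable def fhat (f : ℝ → ℂ) (k : ℤ) : ℂ :=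
  (Complex.ofReal (2 * Real.pi))⁻¹ *
    ∫ x in (0:ℝ)..(2 * Real.pi), f x * Complex.exp (-Complex.I * (k : ℂ) * (x : ℂ))

/-- The multilinear form
`Γ^(p)(M; f₁,…,f_{p+1}) = Σ_{k ∈ Z₀^(p)} M(k) ∏_{l=1}^{p+1} f̂_l(k_l)`,
where `Z₀^(p) = {k ∈ ℤ^{p+1} : k₁ + ⋯ + k_{p+1} = 0}` (indices shifted to start at `0`). -/
noncomputable def Gam (p : ℕ) (M : (Fin (p + 1) → ℤ) → ℂ) (F : Fin (p + 1) → ℝ → ℂ) : ℂ :=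
  ∑' k : {k : Fin (p + 1) → ℤ // (∑ i, k i) = 0}, M k.1 * ∏ i, fhat (F i) (k.1 i)

/-- The argument tuple `(f, …, f, g, g)`: `p − 1` copies of `f` followed by two copies of `g`. -/
def tup (p : ℕ) (f g : ℝ → ℂ) : Fin (p + 1) → ℝ → ℂ :=
  fun i => if (i : ℕ) < p - 1 then f else g

/-- Sobolev norm `‖f‖_{H^s} = (Σ_k (1+k²)^s |f̂(k)|²)^{1/2}`. -/
noncomputable def hsNormC (s : ℕ) (f : ℝ → ℂ) : ℝ :=
  Real.sqrt (∑' k : ℤ, (1 + (k : ℝ) ^ 2) ^ s * ‖fhat f k‖ ^ 2)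

/-- `‖∂_x^m f‖_{L²}² = Σ_k k^{2m} |f̂(k)|²`. -/
noncomputable def dxNormSq (m : ℕ) (f : ℝ → ℂ) : ℝ :=
  ∑' k : ℤ, (k : ℝ) ^ (2 * m) * ‖fhat f k‖ ^ 2

/-- Complexification of a real-valued function. -/
def cF (f : ℝ → ℝ) : ℝ → ℂ := fun x => (f x : ℂ)

/-- `k_{(1,p-1)} = k₁ + ⋯ + k_{p-1}` (with indices shifted to start at `0`). -/
def ksum1 (p : ℕ) (k : Fin (p + 1) → ℤ) : ℤ :=
  ∑ i ∈ Finset.univ.filter (fun i : Fin (p + 1) => (i : ℕ) < p - 1), k i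

/-- The high-frequency cut-off `M_H^(p)` with constant `C₀`:
`1` when `min{|k_p|^{4/5}, |k_{p+1}|^{4/5}} ≥ C₀ max{|k₁|,…,|k_{p-1}|}`, else `0`. -/
noncomputable def MH (C₀ : ℝ) (p : ℕ) (k : Fin (p + 1) → ℤ) : ℂ :=
  if C₀ * fmax (Finset.univ.filter (fun i : Fin (p + 1) => (i : ℕ) < p - 1))
        (fun i => |(k i : ℝ)|)
      ≤ min (|(k (⟨p - 1, by omega⟩ : Fin (p + 1)) : ℝ)| ^ ((4:ℝ)/5))
            (|(k (Fin.last p) : ℝ)| ^ ((4:ℝ)/5))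
  then 1 else 0

/-- The non-zero-sum cut-off `M_NZ^(p)`: `1` when `k_{(1,p-1)} ≠ 0`, else `0`. -/
def MNZ (p : ℕ) (k : Fin (p + 1) → ℤ) : ℂ :=
  if ksum1 p k ≠ 0 then 1 else 0

/-- `D_{a,b,c}(k) = ∏_{l=1}^{a}(ik_l)³ ∏_{l=a+1}^{a+b}(ik_l)² ∏_{l=a+b+1}^{a+b+c}(ik_l)`. -/
noncomputable def Dabc (p a b c : ℕ) (k : Fin (p + 1) → ℤ) : ℂ :=
  (∏ i ∈ Finset.univ.filter (fun i : Fin (p + 1) => (i : ℕ) < a),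
      (Complex.I * (k i : ℂ)) ^ 3)
    * (∏ i ∈ Finset.univ.filter (fun i : Fin (p + 1) => a ≤ (i : ℕ) ∧ (i : ℕ) < a + b),
        (Complex.I * (k i : ℂ)) ^ 2)
    * (∏ i ∈ Finset.univ.filter
          (fun i : Fin (p + 1) => a + b ≤ (i : ℕ) ∧ (i : ℕ) < a + b + c),
        (Complex.I * (k i : ℂ)))

/-- The multiplier
`M_{NR} = M_H M_NZ λ ((s−3/2) a (ik_{(1,p-1)}) D_{a-1,b,c} + b D_{a,b-1,c})`
(the conventions for `a = 0` resp. `b = 0` are automatic since the corresponding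
terms carry the factors `a` resp. `b`). -/
noncomputable def MNR (C₀ : ℝ) (s p : ℕ) (lam : ℝ) (a b c : ℕ)
    (k : Fin (p + 1) → ℤ) : ℂ :=
  MH C₀ p k * MNZ p k * (lam : ℂ) *
    (((s : ℂ) - 3/2) * (a : ℂ) * (Complex.I * (ksum1 p k : ℂ)) * Dabc p (a - 1) b c k
      + (b : ℂ) * Dabc p a (b - 1) c k)

/-- `P_{N_j}(f) = (λ_j b_j/2π) ∫_𝕋 (∂_x³f)^{a_j}(∂_x²f)^{b_j-1}(∂_xf)^{c_j}f^{d_j} dx`. -/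
noncomputable def PNj (lam : ℝ) (a b c d : ℕ) (f : ℝ → ℝ) : ℝ :=
  (lam * (b : ℝ) / (2 * Real.pi)) *
    ∫ x in (0:ℝ)..(2 * Real.pi),
      (iteratedDeriv 3 f x) ^ a * (iteratedDeriv 2 f x) ^ (b - 1) *
        (deriv f x) ^ c * (f x) ^ d

/-- The Japanese bracket `⟨k⟩ = (1 + k²)^{1/2}`. -/
noncomputable def jap (k : ℤ) : ℝ := Real.sqrt (1 + (k : ℝ) ^ 2)

lemma jap_sq (k : ℤ) : jap k ^ 2 = 1 + (k : ℝ) ^ 2 := Real.sq_sqrt (by positivity)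

lemma one_le_jap (k : ℤ) : 1 ≤ jap k := Real.one_le_sqrt.2 (by nlinarith [sq_nonneg (k : ℝ)])

lemma jap_pos (k : ℤ) : 0 < jap k := one_pos.trans_le (one_le_jap k)

lemma abs_le_jap (k : ℤ) : |(k : ℝ)| ≤ jap k := Real.abs_le_sqrt (by linarith)

lemma norm_I_mul_le_jap (k : ℤ) : ‖Complex.I * (k : ℂ)‖ ≤ jap k := by
  simpa using abs_le_jap k

lemma summable_inv_jap_sq : Summable fun k : ℤ => (jap k)⁻¹ ^ 2 := by
  have h1 : Summable fun k : ℤ => 1 / (k : ℝ) ^ 2 :=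
    Real.summable_one_div_int_pow.2 one_lt_two
  have h2 : Summable (Pi.single (0 : ℤ) (1 : ℝ)) :=
    summable_of_hasFiniteSupport ((Set.finite_singleton (0 : ℤ)).subset (by simp))
  refine (h1.add h2).of_nonneg_of_le (fun k => by positivity) fun k => ?_
  rw [inv_pow, jap_sq]
  rcases eq_or_ne k 0 with rfl | hk
  · simp
  · have : (0 : ℝ) < (k : ℝ) ^ 2 := by positivity
    rw [Pi.single_eq_of_ne hk, add_zero, ← one_div]
    exact one_div_le_one_div_of_le this (by linarith)

lemma norm_exp_neg_I_mul (k : ℤ) (x : ℝ) :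
    ‖Complex.exp (-Complex.I * (k : ℂ) * (x : ℂ))‖ = 1 := by
  rw [show -Complex.I * (k : ℂ) * (x : ℂ) = ((-(k * x) : ℝ) : ℂ) * Complex.I by push_cast; ring]
  exact Complex.norm_exp_ofReal_mul_I _

lemma exists_norm_fhat_le {F : ℝ → ℂ} (hF : Continuous F) : ∃ C : ℝ, ∀ k, ‖fhat F k‖ ≤ C := by
  obtain ⟨B, hB⟩ := (isCompact_uIcc (a := (0 : ℝ)) (b := 2 * Real.pi)).exists_bound_of_continuousOn
    hF.continuousOn
  refine ⟨‖(Complex.ofReal (2 * Real.pi))⁻¹‖ * (B * |2 * Real.pi - 0|), fun k => ?_⟩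
  rw [fhat, norm_mul]
  gcongr
  refine intervalIntegral.norm_integral_le_of_norm_le_const fun x hx => ?_
  rw [norm_mul, norm_exp_neg_I_mul, mul_one]
  exact hB x (Set.uIoc_subset_uIcc hx)

lemma fhat_deriv {F : ℝ → ℂ} (hF : ContDiff ℝ 1 F) (hper : Function.Periodic F (2 * Real.pi))
    (k : ℤ) : fhat (deriv F) k = Complex.I * k * fhat F k := by
  have hE (x : ℝ) : HasDerivAt (fun x : ℝ => Complex.exp (-Complex.I * (k : ℂ) * (x : ℂ)))
      (Complex.exp (-Complex.I * (k : ℂ) * (x : ℂ)) * (-Complex.I * k)) x := by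
    have := ((hasDerivAt_id x).ofReal_comp.const_mul (-Complex.I * (k : ℂ))).cexp
    simpa using this
  have hF' (x : ℝ) : HasDerivAt F (deriv F x) x :=
    (hF.differentiable (by norm_num) x).hasDerivAt
  have hcont : Continuous (deriv F) := hF.continuous_deriv le_rfl
  have h := intervalIntegral.integral_mul_deriv_eq_deriv_mul (a := 0) (b := 2 * Real.pi)
    (fun x _ => hF' x) (fun x _ => hE x) (hcont.intervalIntegrable _ _)
    (Continuous.intervalIntegrable (by fun_prop) _ _)
  have h0 : F (2 * Real.pi) = F 0 := by simpa using hper 0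
  have h1 : Complex.exp (-Complex.I * (k : ℂ) * ((2 * Real.pi : ℝ) : ℂ)) = 1 := by
    rw [Complex.exp_eq_one_iff]
    exact ⟨-k, by push_cast; ring⟩
  rw [h0, h1] at h
  simp only [Complex.ofReal_zero, mul_zero, Complex.exp_zero, sub_self, zero_sub] at h
  rw [fhat, fhat, ← neg_eq_iff_eq_neg.2 h]
  simp_rw [← mul_assoc]
  rw [intervalIntegral.integral_mul_const, intervalIntegral.integral_mul_const]
  ring

lemma exists_pow_mul_norm_fhat_le (N : ℕ) : ∀ {F : ℝ → ℂ}, ContDiff ℝ (⊤ : ℕ∞) F →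
    Function.Periodic F (2 * Real.pi) → ∃ C : ℝ, ∀ k : ℤ, |(k : ℝ)| ^ N * ‖fhat F k‖ ≤ C := by
  induction N with
  | zero =>
    intro F hF _
    simpa using exists_norm_fhat_le hF.continuous
  | succ N ih =>
    intro F hF hper
    have hd : ContDiff ℝ (⊤ : ℕ∞) (deriv F) := (contDiff_infty_iff_deriv.1 hF).2
    have hp : Function.Periodic (deriv F) (2 * Real.pi) := fun x => by
      rw [← deriv_comp_add_const, hper.funext]
    obtain ⟨C, hC⟩ := ih hd hp
    refine ⟨C, fun k => (hC k).trans' (le_of_eq ?_)⟩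
    rw [fhat_deriv (hF.of_le (by exact_mod_cast le_top)) hper, norm_mul, norm_mul, Complex.norm_I,
      Complex.norm_intCast]
    ring

lemma summable_hs {F : ℝ → ℂ} (hF : ContDiff ℝ (⊤ : ℕ∞) F)
    (hper : Function.Periodic F (2 * Real.pi)) (s : ℕ) :
    Summable fun k : ℤ => (jap k ^ s * ‖fhat F k‖) ^ 2 := by
  obtain ⟨A, hA⟩ := exists_pow_mul_norm_fhat_le 0 hF hper
  obtain ⟨B, hB⟩ := exists_pow_mul_norm_fhat_le (2 * (s + 1)) hF hper
  refine (summable_inv_jap_sq.mul_left ((2 ^ (s + 1 - 1) * (A + B)) ^ 2)).of_nonneg_of_le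
    (fun k => by positivity) fun k => ?_
  have hj := jap_pos k
  rw [← mul_pow]
  refine pow_le_pow_left₀ (by positivity) ?_ 2
  rw [← div_eq_mul_inv, le_div_iff₀ hj]
  calc jap k ^ s * ‖fhat F k‖ * jap k = jap k ^ (s + 1) * ‖fhat F k‖ := by ring
    _ ≤ jap k ^ (2 * (s + 1)) * ‖fhat F k‖ := by
      gcongr
      · exact one_le_jap k
      · omega
    _ = (1 + (k : ℝ) ^ 2) ^ (s + 1) * ‖fhat F k‖ := by rw [pow_mul, jap_sq]
    _ ≤ (2 ^ (s + 1 - 1) * (1 ^ (s + 1) + ((k : ℝ) ^ 2) ^ (s + 1))) * ‖fhat F k‖ := by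
      gcongr
      exact add_pow_le zero_le_one (sq_nonneg _) _
    _ = 2 ^ (s + 1 - 1) * (|(k : ℝ)| ^ 0 * ‖fhat F k‖
        + |(k : ℝ)| ^ (2 * (s + 1)) * ‖fhat F k‖) := by
      rw [pow_mul |(k : ℝ)|, sq_abs]; ring
    _ ≤ _ := by gcongr; exacts [hA k, hB k]

lemma hsNormC_sq (s : ℕ) (F : ℝ → ℂ) :
    hsNormC s F ^ 2 = ∑' k : ℤ, (jap k ^ s * ‖fhat F k‖) ^ 2 := by
  rw [hsNormC, Real.sq_sqrt (tsum_nonneg fun k => by positivity)]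
  refine tsum_congr fun k => ?_
  rw [mul_pow, ← pow_mul, mul_comm s, pow_mul, jap_sq]

/-- Cauchy–Schwarz: a weighted `ℓ¹` norm of the Fourier coefficients is bounded by a Sobolev norm
of one degree more. -/
lemma summable_and_tsum_jap_pow_mul_le {F : ℝ → ℂ} (hF : ContDiff ℝ (⊤ : ℕ∞) F)
    (hper : Function.Periodic F (2 * Real.pi)) (m : ℕ) :
    (Summable fun k : ℤ => jap k ^ m * ‖fhat F k‖) ∧
      ∑' k : ℤ, jap k ^ m * ‖fhat F k‖
        ≤ Real.sqrt (∑' k : ℤ, (jap k)⁻¹ ^ 2) * hsNormC (m + 1) F := by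
  have h := Real.summable_and_inner_le_Lp_mul_Lq_tsum_of_nonneg
    (f := fun k : ℤ => (jap k)⁻¹) (g := fun k : ℤ => jap k ^ (m + 1) * ‖fhat F k‖)
    Real.HolderConjugate.two_two (fun k => (inv_pos.2 (jap_pos k)).le)
    (fun k => mul_nonneg (pow_nonneg (jap_pos k).le _) (norm_nonneg _))
    (by simpa using summable_inv_jap_sq) (by simpa using summable_hs hF hper (m + 1))
  have he (k : ℤ) : (jap k)⁻¹ * (jap k ^ (m + 1) * ‖fhat F k‖) = jap k ^ m * ‖fhat F k‖ := by
    have := (jap_pos k).ne'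
    field_simp
    ring
  simp only [he, Real.rpow_ofNat, ← Real.sqrt_eq_rpow, ← hsNormC_sq] at h
  rwa [Real.sqrt_sq (show 0 ≤ hsNormC (m + 1) F from Real.sqrt_nonneg _)] at h

lemma hasSum_pi_prod {q : ℕ} {w : Fin q → ℤ → ℝ} (hw0 : ∀ i x, 0 ≤ w i x)
    (hw : ∀ i, Summable (w i)) :
    HasSum (fun k : Fin q → ℤ => ∏ i, w i (k i)) (∏ i, ∑' x, w i x) := by
  induction q with
  | zero => simp
  | succ q ih =>
    have h : HasSum (fun k : Fin q → ℤ => ∏ i : Fin q, w i.succ (k i))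
        (∏ i : Fin q, ∑' x, w i.succ x) := ih (fun i => hw0 i.succ) fun i => hw i.succ
    have hP : (0 : (Fin q → ℤ) → ℝ) ≤ fun k => ∏ i : Fin q, w i.succ (k i) :=
      fun k => Finset.prod_nonneg fun i _ => hw0 _ _
    have hm : Summable fun x : ℤ × (Fin q → ℤ) => w 0 x.1 * ∏ i : Fin q, w i.succ (x.2 i) :=
      Summable.mul_of_nonneg (f := w 0) (g := fun k : Fin q → ℤ => ∏ i : Fin q, w i.succ (k i))
        (hw 0) h.summable (hw0 0) hP
    have h2 := (hw 0).hasSum.mul h hm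
    rw [Fin.prod_univ_succ, ← (Fin.consEquiv fun _ : Fin (q + 1) => ℤ).hasSum_iff]
    simpa [Function.comp_def, Fin.prod_univ_succ] using h2

/-- Young-type bound for convolution sums over the zero-sum hyperplane. -/
lemma summable_and_tsum_zero_sum_le {q : ℕ} {w : Fin q → ℤ → ℝ} (hw0 : ∀ i x, 0 ≤ w i x)
    (hw : ∀ i, Summable (w i)) {G : ℤ → ℝ} (hG : Summable fun x => G x ^ 2) :
    (Summable fun k : {k : Fin (q + 2) → ℤ // (∑ i, k i) = 0} =>
      (∏ i, w i (k.1 i.castSucc.castSucc))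
        * |G (k.1 (Fin.last q).castSucc) * G (k.1 (Fin.last (q + 1)))|) ∧
    ∑' k : {k : Fin (q + 2) → ℤ // (∑ i, k i) = 0}, (∏ i, w i (k.1 i.castSucc.castSucc))
        * |G (k.1 (Fin.last q).castSucc) * G (k.1 (Fin.last (q + 1)))|
      ≤ (∏ i, ∑' x, w i x) * ∑' x, G x ^ 2 := by
  have hp := hasSum_pi_prod hw0 hw
  have hP (k : Fin q → ℤ) : 0 ≤ ∏ i, w i (k i) := Finset.prod_nonneg fun i _ => hw0 _ _
  have hH := hp.mul hG.hasSum (hp.summable.mul_of_nonneg hG hP fun x => sq_nonneg _)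
  have hH0 (x : (Fin q → ℤ) × ℤ) : 0 ≤ (∏ i, w i (x.1 i)) * G x.2 ^ 2 :=
    mul_nonneg (hP _) (sq_nonneg _)
  let e₁ : {k : Fin (q + 2) → ℤ // (∑ i, k i) = 0} → (Fin q → ℤ) × ℤ :=
    fun k => (fun i => k.1 i.castSucc.castSucc, k.1 (Fin.last q).castSucc)
  let e₂ : {k : Fin (q + 2) → ℤ // (∑ i, k i) = 0} → (Fin q → ℤ) × ℤ :=
    fun k => (fun i => k.1 i.castSucc.castSucc, k.1 (Fin.last (q + 1)))
  have hsum (k : {k : Fin (q + 2) → ℤ // (∑ i, k i) = 0}) :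
      ∑ i : Fin q, k.1 i.castSucc.castSucc + k.1 (Fin.last q).castSucc
        + k.1 (Fin.last (q + 1)) = 0 := by
    rw [← Fin.sum_univ_castSucc (fun i : Fin (q + 1) => k.1 i.castSucc), ← Fin.sum_univ_castSucc,
      k.2]
  have hext (k l : {k : Fin (q + 2) → ℤ // (∑ i, k i) = 0})
      (h : (fun i : Fin q => k.1 i.castSucc.castSucc) = fun i => l.1 i.castSucc.castSucc)
      (h' : k.1 (Fin.last q).castSucc = l.1 (Fin.last q).castSucc)
      (h'' : k.1 (Fin.last (q + 1)) = l.1 (Fin.last (q + 1))) : k = l := by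
    refine Subtype.ext (funext fun i => ?_)
    induction i using Fin.lastCases with
    | last => exact h''
    | cast i =>
      induction i using Fin.lastCases with
      | last => exact h'
      | cast i => exact congrFun h i
  have hs (k l : {k : Fin (q + 2) → ℤ // (∑ i, k i) = 0})
      (h : (fun i : Fin q => k.1 i.castSucc.castSucc) = fun i => l.1 i.castSucc.castSucc) :
      k.1 (Fin.last q).castSucc + k.1 (Fin.last (q + 1))
        = l.1 (Fin.last q).castSucc + l.1 (Fin.last (q + 1)) := by
    have hk := hsum k
    have hl := hsum l
    simp only [congrFun h] at hk
    linarith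
  have he₁ : Function.Injective e₁ := fun k l h => by
    obtain ⟨h, h'⟩ := Prod.mk.inj h
    exact hext k l h h' (by linarith [hs k l h])
  have he₂ : Function.Injective e₂ := fun k l h => by
    obtain ⟨h, h'⟩ := Prod.mk.inj h
    exact hext k l h (by linarith [hs k l h]) h'
  have s₁ := hH.summable.comp_injective he₁
  have s₂ := hH.summable.comp_injective he₂
  have t₁ := tsum_comp_le_tsum_of_inj hH.summable hH0 he₁
  have t₂ := tsum_comp_le_tsum_of_inj hH.summable hH0 he₂
  rw [hH.tsum_eq] at t₁ t₂
  simp only [Function.comp_def] at s₁ s₂ t₁ t₂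
  have hle (k : {k : Fin (q + 2) → ℤ // (∑ i, k i) = 0}) :
      (∏ i, w i (k.1 i.castSucc.castSucc))
        * |G (k.1 (Fin.last q).castSucc) * G (k.1 (Fin.last (q + 1)))|
      ≤ 1 / 2 * ((∏ i, w i ((e₁ k).1 i)) * G (e₁ k).2 ^ 2
          + (∏ i, w i ((e₂ k).1 i)) * G (e₂ k).2 ^ 2) := by
    have := mul_le_mul_of_nonneg_left (two_mul_le_add_sq |G (k.1 (Fin.last q).castSucc)|
      |G (k.1 (Fin.last (q + 1)))|) (hP fun i => k.1 i.castSucc.castSucc)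
    rw [sq_abs, sq_abs] at this
    rw [abs_mul]
    simp only [e₁, e₂]
    linarith
  have hB := (s₁.add s₂).mul_left (1 / 2)
  have hS := hB.of_nonneg_of_le (fun k => mul_nonneg (hP _) (abs_nonneg _)) hle
  refine ⟨hS, (hS.tsum_le_tsum hle hB).trans ?_⟩
  rw [tsum_mul_left, s₁.tsum_add s₂]
  linarith

lemma ksum1_succ (q : ℕ) (k : Fin (q + 2) → ℤ) :
    ksum1 (q + 1) k = ∑ i : Fin q, k i.castSucc.castSucc := by
  simp [ksum1, Finset.sum_filter, Fin.sum_univ_castSucc]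

lemma prod_fhat_tup (q : ℕ) (F G : ℝ → ℂ) (k : Fin (q + 2) → ℤ) :
    ∏ i, fhat (tup (q + 1) F G i) (k i) = (∏ i : Fin q, fhat F (k i.castSucc.castSucc))
      * (fhat G (k (Fin.last q).castSucc) * fhat G (k (Fin.last (q + 1)))) := by
  simp [tup, Fin.prod_univ_castSucc, mul_assoc]

lemma norm_Dabc_le {q a b c : ℕ} (h : a + b + c ≤ q) (k : Fin (q + 2) → ℤ) :
    ‖Dabc (q + 1) a b c k‖ ≤ ∏ i : Fin q, jap (k i.castSucc.castSucc) ^ 3 := by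
  have hr : ∏ i : Fin q, jap (k i.castSucc.castSucc) ^ 3
      = ∏ i : Fin (q + 2), if (i : ℕ) < q then jap (k i) ^ 3 else 1 := by
    simp [Fin.prod_univ_castSucc]
  rw [hr, Dabc, Finset.prod_filter, Finset.prod_filter, Finset.prod_filter,
    ← Finset.prod_mul_distrib, ← Finset.prod_mul_distrib, norm_prod]
  refine Finset.prod_le_prod (fun _ _ => norm_nonneg _) fun i _ => ?_
  have h1 := one_le_jap (k i)
  have h2 := norm_I_mul_le_jap (k i)
  have hpow {m : ℕ} (hm : m ≤ 3) : ‖Complex.I * (k i : ℂ)‖ ^ m ≤ jap (k i) ^ 3 :=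
    (pow_le_pow_left₀ (norm_nonneg _) h2 m).trans (pow_le_pow_right₀ h1 hm)
  have h3 := hpow le_rfl
  have h4 := hpow (m := 2) (by norm_num)
  have h5 := hpow (m := 1) (by norm_num)
  have h6 : 1 ≤ jap (k i) ^ 3 := one_le_pow₀ h1
  rw [pow_one] at h5
  by_cases ha : (i : ℕ) < a
  · simpa [ha, show ¬ a ≤ (i : ℕ) by omega, show ¬ a + b ≤ (i : ℕ) by omega,
      show (i : ℕ) < q by omega] using h3
  by_cases hb : (i : ℕ) < a + b
  · simpa [ha, hb, show a ≤ (i : ℕ) by omega, show ¬ a + b ≤ (i : ℕ) by omega,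
      show (i : ℕ) < q by omega] using h4
  by_cases hc : (i : ℕ) < a + b + c
  · simpa [ha, hb, hc, show a + b ≤ (i : ℕ) by omega, show (i : ℕ) < q by omega] using h5
  · simp only [ha, hb, hc, if_false, and_false, mul_one, norm_one]
    split_ifs
    exacts [h6, le_rfl]

lemma Dabc_comp_swap {q a b c : ℕ} (h : a + b + c ≤ q) (k : Fin (q + 2) → ℤ) :
    Dabc (q + 1) a b c (k ∘ Equiv.swap (Fin.last q).castSucc (Fin.last (q + 1)))
      = Dabc (q + 1) a b c k := by
  have hs (i : Fin (q + 2)) (hi : (i : ℕ) < q) :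
      Equiv.swap (Fin.last q).castSucc (Fin.last (q + 1)) i = i :=
    Equiv.swap_apply_of_ne_of_ne (fun h => by simp [h] at hi) (fun h => by simp [h] at hi)
  unfold Dabc
  congr 1
  · congr 1
    · refine Finset.prod_congr rfl fun i hi => ?_
      have := (Finset.mem_filter.1 hi).2
      rw [Function.comp_apply, hs i (by omega)]
    · refine Finset.prod_congr rfl fun i hi => ?_
      have := (Finset.mem_filter.1 hi).2
      rw [Function.comp_apply, hs i (by omega)]
  · refine Finset.prod_congr rfl fun i hi => ?_
    have := (Finset.mem_filter.1 hi).2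
    rw [Function.comp_apply, hs i (by omega)]

lemma Gam_comp_swap (q : ℕ) (M : (Fin (q + 2) → ℤ) → ℂ) (F G : ℝ → ℂ) :
    Gam (q + 1) (fun k => M (k ∘ Equiv.swap (Fin.last q).castSucc (Fin.last (q + 1))))
      (tup (q + 1) F G) = Gam (q + 1) M (tup (q + 1) F G) := by
  let σ := Equiv.swap (Fin.last q).castSucc (Fin.last (q + 1))
  let e : {k : Fin (q + 2) → ℤ // (∑ i, k i) = 0} ≃ {k : Fin (q + 2) → ℤ // (∑ i, k i) = 0} :=
    (σ.arrowCongr (Equiv.refl ℤ)).subtypeEquiv fun k => by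
      simp only [Equiv.arrowCongr_apply, Equiv.coe_refl, Function.comp_apply, id]
      rw [Equiv.sum_comp σ.symm k]
  rw [Gam, Gam, ← e.tsum_eq]
  refine tsum_congr fun k => ?_
  have he : (e k).1 = k.1 ∘ σ := rfl
  have hs (i : Fin q) : σ i.castSucc.castSucc = i.castSucc.castSucc :=
    Equiv.swap_apply_of_ne_of_ne (fun h => by simp [Fin.ext_iff, i.2.ne] at h)
      (fun h => by
        have := i.2
        have := congrArg Fin.val h
        simp at this
        omega)
  have hσσ : (k.1 ∘ σ) ∘ σ = k.1 := by
    ext i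
    simp [σ]
  rw [prod_fhat_tup, prod_fhat_tup, he, hσσ]
  simp only [Function.comp_apply, hs]
  rw [show σ (Fin.last q).castSucc = Fin.last (q + 1) from Equiv.swap_apply_left _ _,
    show σ (Fin.last (q + 1)) = (Fin.last q).castSucc from Equiv.swap_apply_right _ _]
  ring

lemma sq_le_of_rpow_le {C₀ v x : ℝ} (hC : 0 < C₀) (hv : 1 ≤ v)
    (h : |x| ^ ((4 : ℝ) / 5) ≤ C₀ * v) : x ^ 2 ≤ (C₀ ^ 5 + 1) * v ^ 3 := by
  have h4 : |x| ^ 4 ≤ (C₀ * v) ^ 5 := by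
    calc |x| ^ 4 = (|x| ^ ((4 : ℝ) / 5)) ^ 5 := by
          rw [← Real.rpow_natCast (|x| ^ ((4 : ℝ) / 5)), ← Real.rpow_mul (abs_nonneg x)]
          norm_num
      _ ≤ _ := by gcongr
  refine le_of_sq_le_sq ?_ (by positivity)
  calc (x ^ 2) ^ 2 = |x| ^ 4 := by rw [← sq_abs x]; ring
    _ ≤ C₀ ^ 5 * v ^ 5 := by rwa [mul_pow] at h4
    _ ≤ (C₀ ^ 5 + 1) ^ 2 * v ^ 6 := by
      have : 0 < C₀ ^ 5 := by positivity
      gcongr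
      · nlinarith
      · norm_num
    _ = _ := by ring

lemma abs_mul_mul_le {A v Q K x y : ℝ} (hA : 0 ≤ A) (hv : 1 ≤ v) (hQ : 0 ≤ Q) (hK : |K| ≤ Q * v)
    (hsum : K + x + y = 0) (hx : x ^ 2 ≤ A * v ^ 3) :
    |K| * (|x| * |y|) ≤ Q * (2 * A + Q ^ 2) * v ^ 4 := by
  have hK2 : K ^ 2 ≤ Q ^ 2 * v ^ 3 := by
    calc K ^ 2 = |K| ^ 2 := (sq_abs K).symm
      _ ≤ (Q * v) ^ 2 := by gcongr
      _ = Q ^ 2 * v ^ 2 := by ring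
      _ ≤ _ := by gcongr; norm_num
  have hy : y ^ 2 ≤ 2 * x ^ 2 + 2 * K ^ 2 := by
    rw [show y = -(x + K) by linarith]
    nlinarith [sq_nonneg (x - K)]
  have hxy : |x| * |y| ≤ (2 * A + Q ^ 2) * v ^ 3 := by
    have := two_mul_le_add_sq |x| |y|
    rw [sq_abs, sq_abs] at this
    have : 0 ≤ A * v ^ 3 := by positivity
    nlinarith
  calc |K| * (|x| * |y|) ≤ (Q * v) * ((2 * A + Q ^ 2) * v ^ 3) := by gcongr
    _ = _ := by ring

/-- The constant in the low-frequency bound for the part of the sum removed by the cut-offs. -/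
noncomputable def cutoffConst (C₀ : ℝ) (q : ℕ) : ℝ := q * (2 * (C₀ ^ 5 + 1) + (q : ℝ) ^ 2)

lemma cutoffConst_nonneg {C₀ : ℝ} (hC₀ : 0 < C₀) (q : ℕ) : 0 ≤ cutoffConst C₀ q := by
  unfold cutoffConst
  positivity

lemma norm_one_sub_cutoff_le {C₀ : ℝ} (hC₀ : 0 < C₀) {q : ℕ} (hq : 1 ≤ q) (k : Fin (q + 2) → ℤ)
    (hk : ∑ i, k i = 0) :
    ‖Complex.I * (ksum1 (q + 1) k : ℂ)‖ * (‖Complex.I * (k (Fin.last q).castSucc : ℂ)‖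
        * ‖Complex.I * (k (Fin.last (q + 1)) : ℂ)‖) * ‖1 - MH C₀ (q + 1) k * MNZ (q + 1) k‖
      ≤ cutoffConst C₀ q
        * ∑ j : Fin q, jap (k j.castSucc.castSucc) ^ 4 := by
  have hpos : 0 ≤ cutoffConst C₀ q
      * ∑ j : Fin q, jap (k j.castSucc.castSucc) ^ 4 :=
    mul_nonneg (cutoffConst_nonneg hC₀ q) (Finset.sum_nonneg fun j _ => pow_nonneg (jap_pos _).le _)
  by_cases hK : ksum1 (q + 1) k = 0
  · simpa [hK] using hpos
  have hNZ : MNZ (q + 1) k = 1 := if_pos hK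
  rw [hNZ, mul_one]
  unfold MH
  split_ifs with hH
  · simpa using hpos
  have hne : (Finset.univ.filter fun i : Fin (q + 2) => (i : ℕ) < q + 1 - 1).Nonempty :=
    ⟨0, by simp; omega⟩
  obtain ⟨i₀, hi₀, hmax⟩ := Finset.exists_mem_eq_sup _ hne
    fun i => Real.toNNReal |(k i : ℝ)|
  obtain ⟨j, rfl⟩ : ∃ j : Fin q, j.castSucc.castSucc = i₀ := ⟨⟨i₀, by simpa using hi₀⟩, rfl⟩
  have hfmax : fmax (Finset.univ.filter fun i : Fin (q + 2) => (i : ℕ) < q + 1 - 1)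
      (fun i => |(k i : ℝ)|) = |(k j.castSucc.castSucc : ℝ)| := by
    rw [fmax, hmax, Real.coe_toNNReal _ (abs_nonneg _)]
  have hle (i : Fin q) : |(k i.castSucc.castSucc : ℝ)| ≤ |(k j.castSucc.castSucc : ℝ)| := by
    have hi : i.castSucc.castSucc ∈
        Finset.univ.filter fun i : Fin (q + 2) => (i : ℕ) < q + 1 - 1 := by simp
    have := Finset.le_sup (f := fun i => Real.toNNReal |(k i : ℝ)|) hi
    rw [hmax] at this
    exact (Real.toNNReal_le_toNNReal_iff (abs_nonneg _)).1 this
  have hv := one_le_jap (k j.castSucc.castSucc)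
  have hKle : |(ksum1 (q + 1) k : ℝ)| ≤ q * jap (k j.castSucc.castSucc) := by
    rw [ksum1_succ, Int.cast_sum]
    calc |∑ i : Fin q, (k i.castSucc.castSucc : ℝ)|
        ≤ ∑ i : Fin q, |(k i.castSucc.castSucc : ℝ)| := Finset.abs_sum_le_sum_abs _ _
      _ ≤ ∑ _i : Fin q, jap (k j.castSucc.castSucc) := Finset.sum_le_sum fun i _ => (hle i).trans (abs_le_jap _)
      _ = q * jap (k j.castSucc.castSucc) := by simp
  have hsum : (ksum1 (q + 1) k : ℝ) + k (Fin.last q).castSucc + k (Fin.last (q + 1)) = 0 := by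
    rw [Fin.sum_univ_castSucc, Fin.sum_univ_castSucc, ← ksum1_succ] at hk
    exact_mod_cast hk
  have hn : (⟨q + 1 - 1, by omega⟩ : Fin (q + 1 + 1)) = (Fin.last q).castSucc := rfl
  rw [hfmax, not_le, hn] at hH
  have hlt : C₀ * |(k j.castSucc.castSucc : ℝ)| ≤ C₀ * jap (k j.castSucc.castSucc) := by
    exact mul_le_mul_of_nonneg_left (abs_le_jap _) hC₀.le
  have hA : 0 ≤ C₀ ^ 5 + 1 := add_nonneg (pow_nonneg hC₀.le 5) zero_le_one
  have key : |(ksum1 (q + 1) k : ℝ)| * (|(k (Fin.last q).castSucc : ℝ)|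
      * |(k (Fin.last (q + 1)) : ℝ)|)
      ≤ cutoffConst C₀ q * jap (k j.castSucc.castSucc) ^ 4 := by
    unfold cutoffConst
    rcases min_lt_iff.1 hH with h | h
    · have hx : (k (Fin.last q).castSucc : ℝ) ^ 2
          ≤ (C₀ ^ 5 + 1) * jap (k j.castSucc.castSucc) ^ 3 :=
        sq_le_of_rpow_le hC₀ hv (h.le.trans hlt)
      exact abs_mul_mul_le hA hv (Nat.cast_nonneg q) hKle hsum hx
    · have hx : (k (Fin.last (q + 1)) : ℝ) ^ 2
          ≤ (C₀ ^ 5 + 1) * jap (k j.castSucc.castSucc) ^ 3 :=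
        sq_le_of_rpow_le hC₀ hv (h.le.trans hlt)
      rw [mul_comm |(k (Fin.last q).castSucc : ℝ)|]
      exact abs_mul_mul_le hA hv (Nat.cast_nonneg q) hKle (by rw [← hsum]; ring) hx
  simp only [norm_mul, Complex.norm_I, one_mul, Complex.norm_intCast, sub_zero, norm_one, mul_one]
  refine key.trans ?_
  refine mul_le_mul_of_nonneg_left ?_ (cutoffConst_nonneg hC₀ q)
  exact Finset.single_le_sum (f := fun j : Fin q => jap (k j.castSucc.castSucc) ^ 4)
    (fun j _ => pow_nonneg (jap_pos _).le _) (Finset.mem_univ j)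

lemma norm_mul_prod_fhat_tup_le {q r : ℕ} {e : Fin q → ℕ} {c : ℝ} {z : ℂ} {k : Fin (q + 2) → ℤ}
    (F G : ℝ → ℂ) (hz : ‖z‖ ≤ c * (∏ i : Fin q, jap (k i.castSucc.castSucc) ^ e i)
      * (jap (k (Fin.last q).castSucc) ^ r * jap (k (Fin.last (q + 1))) ^ r)) :
    ‖z * ∏ i, fhat (tup (q + 1) F G i) (k i)‖
      ≤ c * ((∏ i : Fin q, jap (k i.castSucc.castSucc) ^ e i * ‖fhat F (k i.castSucc.castSucc)‖)
        * |jap (k (Fin.last q).castSucc) ^ r * ‖fhat G (k (Fin.last q).castSucc)‖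
          * (jap (k (Fin.last (q + 1))) ^ r * ‖fhat G (k (Fin.last (q + 1)))‖)|) := by
  have h1 := (jap_pos (k (Fin.last q).castSucc)).le
  have h2 := (jap_pos (k (Fin.last (q + 1)))).le
  rw [prod_fhat_tup, norm_mul, norm_mul, norm_mul, norm_prod, Finset.prod_mul_distrib,
    abs_of_nonneg (by positivity)]
  refine (mul_le_mul_of_nonneg_right hz (by positivity)).trans (le_of_eq ?_)
  ring

/-- A multiplier losing at most three derivatives on each `f` and `r` on each `g` yields an
absolutely convergent series defining `Gam`. -/
lemma summable_Gam {q r : ℕ} {M : (Fin (q + 2) → ℤ) → ℂ} {c : ℝ}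
    (hM : ∀ k, ‖M k‖ ≤ c * (∏ i : Fin q, jap (k i.castSucc.castSucc) ^ 3)
      * (jap (k (Fin.last q).castSucc) ^ r * jap (k (Fin.last (q + 1))) ^ r))
    {F G : ℝ → ℂ} (hF : ContDiff ℝ (⊤ : ℕ∞) F) (hFp : Function.Periodic F (2 * Real.pi))
    (hG : ContDiff ℝ (⊤ : ℕ∞) G) (hGp : Function.Periodic G (2 * Real.pi)) :
    Summable fun k : {k : Fin (q + 2) → ℤ // (∑ i, k i) = 0} =>
      M k.1 * ∏ i, fhat (tup (q + 1) F G i) (k.1 i) := by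
  have h := (summable_and_tsum_zero_sum_le (q := q) (w := fun _ x => jap x ^ 3 * ‖fhat F x‖)
    (fun i x => mul_nonneg (pow_nonneg (jap_pos x).le _) (norm_nonneg _))
    (fun i => (summable_and_tsum_jap_pow_mul_le hF hFp 3).1) (summable_hs hG hGp r)).1
  exact (h.mul_left c).of_norm_bounded fun k => norm_mul_prod_fhat_tup_le F G (hM k.1)

/-- A multiplier losing at most seven derivatives on one `f`, three on the others, and `r` on each
`g`. -/
lemma summable_and_norm_tsum_le {q r : ℕ} {M : (Fin (q + 2) → ℤ) → ℂ} {c : ℝ} (hc : 0 ≤ c)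
    (hM : ∀ k, ∑ i, k i = 0 → ‖M k‖ ≤ c * (∑ j : Fin q, jap (k j.castSucc.castSucc) ^ 4)
      * (∏ i : Fin q, jap (k i.castSucc.castSucc) ^ 3)
      * (jap (k (Fin.last q).castSucc) ^ r * jap (k (Fin.last (q + 1))) ^ r))
    {F G : ℝ → ℂ} (hF : ContDiff ℝ (⊤ : ℕ∞) F) (hFp : Function.Periodic F (2 * Real.pi))
    (hG : ContDiff ℝ (⊤ : ℕ∞) G) (hGp : Function.Periodic G (2 * Real.pi)) :
    (Summable fun k : {k : Fin (q + 2) → ℤ // (∑ i, k i) = 0} =>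
      M k.1 * ∏ i, fhat (tup (q + 1) F G i) (k.1 i)) ∧
    ‖Gam (q + 1) M (tup (q + 1) F G)‖
      ≤ c * q * Real.sqrt (∑' k : ℤ, (jap k)⁻¹ ^ 2) ^ q
        * hsNormC 4 F ^ (q - 1) * hsNormC 8 F * hsNormC r G ^ 2 := by
  set S := Real.sqrt (∑' k : ℤ, (jap k)⁻¹ ^ 2)
  have hS0 : 0 ≤ S := Real.sqrt_nonneg _
  let e : Fin q → Fin q → ℕ := fun j i => if i = j then 7 else 3
  have hw0 (m : ℕ) (x : ℤ) : 0 ≤ jap x ^ m * ‖fhat F x‖ :=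
    mul_nonneg (pow_nonneg (jap_pos x).le _) (norm_nonneg _)
  have h (j : Fin q) := summable_and_tsum_zero_sum_le (q := q)
    (w := fun i x => jap x ^ e j i * ‖fhat F x‖) (fun i x => hw0 _ x)
    (fun i => (summable_and_tsum_jap_pow_mul_le hF hFp _).1) (summable_hs hG hGp r)
  have hprod (j : Fin q) : ∏ i, ∑' x, jap x ^ e j i * ‖fhat F x‖
      ≤ S ^ q * hsNormC 4 F ^ (q - 1) * hsNormC 8 F := by
    calc ∏ i, ∑' x, jap x ^ e j i * ‖fhat F x‖
        ≤ ∏ i, if i = j then S * hsNormC 8 F else S * hsNormC 4 F := by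
          refine Finset.prod_le_prod (fun i _ => tsum_nonneg fun x => hw0 _ x) fun i _ => ?_
          simp only [e]
          split_ifs
          exacts [(summable_and_tsum_jap_pow_mul_le hF hFp 7).2,
            (summable_and_tsum_jap_pow_mul_le hF hFp 3).2]
      _ = (S * hsNormC 8 F) * (S * hsNormC 4 F) ^ (q - 1) := by
          rw [← Finset.mul_prod_erase _ _ (Finset.mem_univ j), if_pos rfl,
            Finset.prod_congr rfl fun i hi => if_neg (Finset.ne_of_mem_erase hi),
            Finset.prod_const, Finset.card_erase_of_mem (Finset.mem_univ j), Finset.card_univ,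
            Fintype.card_fin]
      _ = _ := by
          obtain ⟨n, rfl⟩ : ∃ n, q = n + 1 := ⟨q - 1, by have := j.2; omega⟩
          rw [Nat.add_sub_cancel]
          ring
  have hle (k : {k : Fin (q + 2) → ℤ // (∑ i, k i) = 0}) :
      ‖M k.1 * ∏ i, fhat (tup (q + 1) F G i) (k.1 i)‖
      ≤ ∑ j : Fin q, c * ((∏ i : Fin q,
          jap (k.1 i.castSucc.castSucc) ^ e j i * ‖fhat F (k.1 i.castSucc.castSucc)‖)
        * |jap (k.1 (Fin.last q).castSucc) ^ r * ‖fhat G (k.1 (Fin.last q).castSucc)‖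
          * (jap (k.1 (Fin.last (q + 1))) ^ r * ‖fhat G (k.1 (Fin.last (q + 1)))‖)|) := by
    have hz := hM k.1 k.2
    have hsplit (j : Fin q) : ∏ i : Fin q, jap (k.1 i.castSucc.castSucc) ^ e j i
        = jap (k.1 j.castSucc.castSucc) ^ 4 * ∏ i : Fin q, jap (k.1 i.castSucc.castSucc) ^ 3 := by
      rw [← Finset.mul_prod_erase _ _ (Finset.mem_univ j), ← Finset.mul_prod_erase
        (a := j) Finset.univ (fun i : Fin q => jap (k.1 i.castSucc.castSucc) ^ 3)
        (Finset.mem_univ j), ← mul_assoc]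
      congr 1
      · simp only [e, if_true]
        ring
      · refine Finset.prod_congr rfl fun i hi => ?_
        simp only [e, if_neg (Finset.ne_of_mem_erase hi)]
    have h1 := (jap_pos (k.1 (Fin.last q).castSucc)).le
    have h2 := (jap_pos (k.1 (Fin.last (q + 1)))).le
    rw [prod_fhat_tup, norm_mul, norm_mul, norm_mul, norm_prod]
    refine (mul_le_mul_of_nonneg_right hz (by positivity)).trans (le_of_eq ?_)
    rw [abs_of_nonneg (by positivity), ← Finset.mul_sum, ← Finset.sum_mul]
    simp_rw [Finset.prod_mul_distrib, hsplit, ← Finset.sum_mul]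
    ring
  have hsum := summable_sum fun (j : Fin q) (_ : j ∈ Finset.univ) => (h j).1.mul_left c
  refine ⟨hsum.of_norm_bounded hle, (tsum_of_norm_bounded hsum.hasSum hle).trans ?_⟩
  rw [Summable.tsum_finsetSum fun j _ => (h j).1.mul_left c]
  calc _ ≤ ∑ _j : Fin q, c * (S ^ q * hsNormC 4 F ^ (q - 1) * hsNormC 8 F * hsNormC r G ^ 2) := by
        refine Finset.sum_le_sum fun j _ => ?_
        rw [tsum_mul_left]
        refine mul_le_mul_of_nonneg_left ((h j).2.trans ?_) hc
        rw [← hsNormC_sq]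
        exact mul_le_mul_of_nonneg_right (hprod j) (sq_nonneg _)
    _ = _ := by
        rw [Finset.sum_const, Finset.card_univ, Fintype.card_fin, nsmul_eq_mul]
        ring

lemma contDiff_cF {f : ℝ → ℝ} (hf : ContDiff ℝ (⊤ : ℕ∞) f) : ContDiff ℝ (⊤ : ℕ∞) (cF f) :=
  Complex.ofRealCLM.contDiff.comp hf

lemma periodic_cF {f : ℝ → ℝ} {T : ℝ} (hf : Function.Periodic f T) : Function.Periodic (cF f) T :=
  fun x => by rw [cF, cF, hf x]

/-- **Lemma lem_ga1.** For real-valued smooth `2π`-periodic `f, g` and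
`M_{1,*} = −(1/2)λ_j a_j (ik_{(1,p_j-1)})(ik_{p_j})^{s+1}(ik_{p_j+1})^{s+1}D_{a_j-1,b_j,c_j}M_H M_NZ`:
`|Γ^{(p_j)}(λ_j a_j (ik_{p_j})^{s+2}(ik_{p_j+1})^{s+1}D_{a_j-1,b_j,c_j}; f,…,f,g,g)
  − Γ^{(p_j)}(M_{1,*}; f,…,f,g,g)| ≲ ‖f‖_{H⁴}^{p_j−2} ‖f‖_{H⁸} ‖g‖_{H^s}²`. -/
theorem lem_ga1 (s : ℕ) (lam : ℝ) (a b c d : ℕ) (p : ℕ) (hpdef : p = a + b + c + d)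
    (hp2 : 2 ≤ p) (ha : 1 ≤ a) (C₀ : ℝ) (hC₀ : 0 < C₀) :
    ∃ C : ℝ, 0 < C ∧ ∀ f g : ℝ → ℝ,
      ContDiff ℝ (⊤ : ℕ∞) f → Function.Periodic f (2 * Real.pi) →
      ContDiff ℝ (⊤ : ℕ∞) g → Function.Periodic g (2 * Real.pi) →
      ‖Gam p (fun k => (lam : ℂ) * (a : ℂ)
            * (Complex.I * (k (⟨p - 1, by omega⟩ : Fin (p + 1)) : ℂ)) ^ (s + 2)
            * (Complex.I * (k (Fin.last p) : ℂ)) ^ (s + 1)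
            * Dabc p (a - 1) b c k)
          (tup p (cF f) (cF g))
        - Gam p (fun k => -(1/2 : ℂ) * (lam : ℂ) * (a : ℂ)
            * (Complex.I * (ksum1 p k : ℂ))
            * (Complex.I * (k (⟨p - 1, by omega⟩ : Fin (p + 1)) : ℂ)) ^ (s + 1)
            * (Complex.I * (k (Fin.last p) : ℂ)) ^ (s + 1)
            * Dabc p (a - 1) b c k * MH C₀ p k * MNZ p k)
          (tup p (cF f) (cF g))‖
      ≤ C * hsNormC 4 (cF f) ^ (p - 2) * hsNormC 8 (cF f) * hsNormC s (cF g) ^ 2 := by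
  obtain ⟨q, rfl⟩ : ∃ q, p = q + 1 := ⟨p - 1, by omega⟩
  have hq : 1 ≤ q := by omega
  have hD : (a - 1) + b + c ≤ q := by omega
  obtain ⟨S, hS⟩ : ∃ S, S = Real.sqrt (∑' k : ℤ, (jap k)⁻¹ ^ 2) := ⟨_, rfl⟩
  have hS0 : 0 ≤ S := hS ▸ Real.sqrt_nonneg _
  obtain ⟨c₁, hc₁⟩ : ∃ c₁, c₁ = ‖(lam : ℂ) * (a : ℂ)‖ * cutoffConst C₀ q := ⟨_, rfl⟩
  have hc₁0 : 0 ≤ c₁ := hc₁ ▸ mul_nonneg (norm_nonneg _) (cutoffConst_nonneg hC₀ q)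
  refine ⟨c₁ * q * S ^ q + 1, add_pos_of_nonneg_of_pos (mul_nonneg (mul_nonneg hc₁0
    (Nat.cast_nonneg q)) (pow_nonneg hS0 q)) one_pos, fun f g hf hfp hg hgp => ?_⟩
  have hn : (⟨q + 1 - 1, by omega⟩ : Fin (q + 1 + 1)) = (Fin.last q).castSucc := rfl
  rw [hn]
  set M₁ : (Fin (q + 2) → ℤ) → ℂ := fun k => (lam : ℂ) * (a : ℂ)
    * (Complex.I * (k (Fin.last q).castSucc : ℂ)) ^ (s + 2)
    * (Complex.I * (k (Fin.last (q + 1)) : ℂ)) ^ (s + 1) * Dabc (q + 1) (a - 1) b c k with hM₁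
  set M₂ : (Fin (q + 2) → ℤ) → ℂ := fun k => -(1/2 : ℂ) * (lam : ℂ) * (a : ℂ)
    * (Complex.I * (ksum1 (q + 1) k : ℂ))
    * (Complex.I * (k (Fin.last q).castSucc : ℂ)) ^ (s + 1)
    * (Complex.I * (k (Fin.last (q + 1)) : ℂ)) ^ (s + 1)
    * Dabc (q + 1) (a - 1) b c k * MH C₀ (q + 1) k * MNZ (q + 1) k with hM₂
  let M₁' : (Fin (q + 2) → ℤ) → ℂ := fun k =>
    M₁ (k ∘ Equiv.swap (Fin.last q).castSucc (Fin.last (q + 1)))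
  have hM₁' (k : Fin (q + 2) → ℤ) : M₁' k = (lam : ℂ) * (a : ℂ)
      * (Complex.I * (k (Fin.last (q + 1)) : ℂ)) ^ (s + 2)
      * (Complex.I * (k (Fin.last q).castSucc : ℂ)) ^ (s + 1)
      * Dabc (q + 1) (a - 1) b c k := by
    simp only [M₁', M₁, Dabc_comp_swap hD, Function.comp_apply, Equiv.swap_apply_left,
      Equiv.swap_apply_right]
  let N : (Fin (q + 2) → ℤ) → ℂ := fun k => 1 / 2 * (M₁ k + M₁' k) - M₂ k
  have hF := contDiff_cF hf
  have hFp := periodic_cF hfp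
  have hG := contDiff_cF hg
  have hGp := periodic_cF hgp
  have hpow (k : ℤ) {m n : ℕ} (h : m ≤ n) : ‖Complex.I * (k : ℂ)‖ ^ m ≤ jap k ^ n :=
    (pow_le_pow_left₀ (norm_nonneg _) (norm_I_mul_le_jap k) m).trans
      (pow_le_pow_right₀ (one_le_jap k) h)
  have hbase (k : Fin (q + 2) → ℤ) {A B : ℝ} (hA0 : 0 ≤ A) (hB0 : 0 ≤ B)
      (hA : A ≤ jap (k (Fin.last q).castSucc) ^ (s + 2))
      (hB : B ≤ jap (k (Fin.last (q + 1))) ^ (s + 2)) :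
      ‖(lam : ℂ) * (a : ℂ)‖ * ‖Dabc (q + 1) (a - 1) b c k‖ * (A * B)
      ≤ ‖(lam : ℂ) * (a : ℂ)‖ * (∏ i : Fin q, jap (k i.castSucc.castSucc) ^ 3)
        * (jap (k (Fin.last q).castSucc) ^ (s + 2) * jap (k (Fin.last (q + 1))) ^ (s + 2)) := by
    have hDk := norm_Dabc_le hD k
    have hP : 0 ≤ ∏ i : Fin q, jap (k i.castSucc.castSucc) ^ 3 := (norm_nonneg _).trans hDk
    exact mul_le_mul (mul_le_mul_of_nonneg_left hDk (norm_nonneg _))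
      (mul_le_mul hA hB hB0 (hA0.trans hA)) (mul_nonneg hA0 hB0) (mul_nonneg (norm_nonneg _) hP)
  have s₁ := summable_Gam (M := M₁) (fun k => by
    refine (le_of_eq ?_).trans (hbase k (pow_nonneg (norm_nonneg _) _)
      (pow_nonneg (norm_nonneg _) _) (hpow _ le_rfl) (hpow _ (Nat.le_succ (s + 1))))
    simp only [hM₁, norm_mul, norm_pow]
    ring) hF hFp hG hGp
  have s₁' := summable_Gam (M := M₁') (fun k => by
    refine (le_of_eq ?_).trans (hbase k (pow_nonneg (norm_nonneg _) _)
      (pow_nonneg (norm_nonneg _) _) (hpow _ (Nat.le_succ (s + 1))) (hpow _ le_rfl))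
    simp only [hM₁', norm_mul, norm_pow]
    ring) hF hFp hG hGp
  have hN (k : Fin (q + 2) → ℤ) (hk : ∑ i, k i = 0) :
      N k = -(1/2 : ℂ) * ((lam : ℂ) * (a : ℂ)) * (Complex.I * (ksum1 (q + 1) k : ℂ))
        * (Complex.I * (k (Fin.last q).castSucc : ℂ)) ^ (s + 1)
        * (Complex.I * (k (Fin.last (q + 1)) : ℂ)) ^ (s + 1)
        * Dabc (q + 1) (a - 1) b c k * (1 - MH C₀ (q + 1) k * MNZ (q + 1) k) := by
    have hsum : (ksum1 (q + 1) k : ℂ)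
        = -((k (Fin.last q).castSucc : ℂ) + (k (Fin.last (q + 1)) : ℂ)) := by
      rw [Fin.sum_univ_castSucc, Fin.sum_univ_castSucc, ← ksum1_succ] at hk
      have : (ksum1 (q + 1) k : ℂ) + k (Fin.last q).castSucc + k (Fin.last (q + 1)) = 0 := by
        exact_mod_cast hk
      linear_combination this
    simp only [N, hM₁', hM₁, hM₂, hsum]
    ring
  obtain ⟨sN, hNle⟩ := summable_and_norm_tsum_le (M := N) (r := s) hc₁0 (fun k hk => by
    have hcut := norm_one_sub_cutoff_le hC₀ hq k hk
    have hDk := norm_Dabc_le hD k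
    have hx := hpow (k (Fin.last q).castSucc) (le_refl s)
    have hy := hpow (k (Fin.last (q + 1))) (le_refl s)
    have hJ := (jap_pos (k (Fin.last q).castSucc)).le
    rw [hN k hk]
    calc _ = 1 / 2 * ‖(lam : ℂ) * (a : ℂ)‖ * (‖Complex.I * (ksum1 (q + 1) k : ℂ)‖
            * (‖Complex.I * (k (Fin.last q).castSucc : ℂ)‖
              * ‖Complex.I * (k (Fin.last (q + 1)) : ℂ)‖)
            * ‖1 - MH C₀ (q + 1) k * MNZ (q + 1) k‖) * ‖Dabc (q + 1) (a - 1) b c k‖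
            * (‖Complex.I * (k (Fin.last q).castSucc : ℂ)‖ ^ s
              * ‖Complex.I * (k (Fin.last (q + 1)) : ℂ)‖ ^ s) := by
          simp only [norm_mul, norm_pow, norm_neg, norm_div, norm_one, Complex.norm_ofNat]
          ring
      _ ≤ 1 * ‖(lam : ℂ) * (a : ℂ)‖ * (cutoffConst C₀ q
            * ∑ j : Fin q, jap (k j.castSucc.castSucc) ^ 4)
            * (∏ i : Fin q, jap (k i.castSucc.castSucc) ^ 3)
            * (jap (k (Fin.last q).castSucc) ^ s * jap (k (Fin.last (q + 1))) ^ s) := by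
          have hP : 0 ≤ ∏ i : Fin q, jap (k i.castSucc.castSucc) ^ 3 := (norm_nonneg _).trans hDk
          have hT : 0 ≤ cutoffConst C₀ q
            * ∑ j : Fin q, jap (k j.castSucc.castSucc) ^ 4 := mul_nonneg (cutoffConst_nonneg hC₀ q) (Finset.sum_nonneg fun j _ =>
              pow_nonneg (jap_pos _).le _)
          exact mul_le_mul (mul_le_mul (mul_le_mul (mul_le_mul_of_nonneg_right (by norm_num)
            (norm_nonneg _)) hcut (mul_nonneg (mul_nonneg (norm_nonneg _) (mul_nonneg (norm_nonneg _)
            (norm_nonneg _))) (norm_nonneg _)) (mul_nonneg zero_le_one (norm_nonneg _))) hDk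
            (norm_nonneg _) (mul_nonneg (mul_nonneg zero_le_one (norm_nonneg _)) hT))
            (mul_le_mul hx hy (pow_nonneg (norm_nonneg _) _) (pow_nonneg hJ _))
            (mul_nonneg (pow_nonneg (norm_nonneg _) _) (pow_nonneg (norm_nonneg _) _))
            (mul_nonneg (mul_nonneg (mul_nonneg zero_le_one (norm_nonneg _)) hT) hP)
      _ = _ := by rw [hc₁]; ring) hF hFp hG hGp
  have hdiff : Gam (q + 1) M₁ (tup (q + 1) (cF f) (cF g))
      - Gam (q + 1) M₂ (tup (q + 1) (cF f) (cF g))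
      = Gam (q + 1) N (tup (q + 1) (cF f) (cF g)) := by
    have hsw := Gam_comp_swap q M₁ (cF f) (cF g)
    have hM₂sum : Gam (q + 1) M₂ (tup (q + 1) (cF f) (cF g))
        = 1 / 2 * (Gam (q + 1) M₁ (tup (q + 1) (cF f) (cF g))
          + Gam (q + 1) M₁' (tup (q + 1) (cF f) (cF g)))
          - Gam (q + 1) N (tup (q + 1) (cF f) (cF g)) := by
      rw [Gam, Gam, Gam, Gam, ← s₁.tsum_add s₁', ← tsum_mul_left,
        ← ((s₁.add s₁').mul_left (1 / 2)).tsum_sub sN]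
      refine tsum_congr fun k => ?_
      simp only [N]
      ring
    rw [hM₂sum, show Gam (q + 1) M₁' _ = _ from hsw]
    ring
  rw [hdiff, hS]
  rw [hS] at hS0
  refine hNle.trans ?_
  have h4 : 0 ≤ hsNormC 4 (cF f) := Real.sqrt_nonneg _
  have h8 : 0 ≤ hsNormC 8 (cF f) := Real.sqrt_nonneg _
  rw [show q + 1 - 2 = q - 1 by omega]
  gcongr
  linarith

end FifthOrderStmt16
end

section
/- Let s ∈ ℕ∪{0}, let j be an index with data (λ_j, a_j, b_j, c_j, d_j) and p_j := a_j+b_j+c_j+d_j ≥ 2, and assume b_j ≥ 1. Set M_{2,*} := λ_j b_j (ik_{p_j})^{s+1}(ik_{p_j+1})^{s+1} D_{a_j,b_j−1,c_j} M_H^{(p_j)} M_NZ^{(p_j)}. Then there exists C > 0 (depending on s, p_j, λ_j and the constant C₀ in M_H) such that for all real-valued f, g ∈ C^∞(𝕋): |Γ^{(p_j)}(λ_j b_j (ik_{p_j})^{s+1}(ik_{p_j+1})^{s+1} D_{a_j,b_j−1,c_j}; f,…,f,g,g) − P_{N_j}(f) ‖∂_x^{s+1} g‖_{L²}² − Γ^{(p_j)}(M_{2,*};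 f,…,f,g,g)| ≤ C ‖f‖_{H⁴}^{p_j−2} ‖f‖_{H⁷} ‖g‖_{H^s}², where the first p_j−1 arguments are f, the last two are g, and ‖∂_x^{s+1}g‖_{L²}² = Σ_{k∈ℤ} k^{2(s+1)}|ĝ(k)|². -/
/- Lemma lem_ga23 (first part): normal form reduction for the D_{a,b-1,c} part,
   producing the resonant term P_{N_j}(f)‖∂_x^{s+1}g‖_{L²}². -/

namespace FifthOrderStmt17

open scoped NNReal Classical

/-- Maximum of a nonnegative real-valued family over a finset (`0` if the finset is empty). -/
noncomputable def fmax {α : Type*} (s : Finset α) (f : α → ℝ) : ℝ :=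
  ((s.sup fun i => Real.toNNReal (f i) : ℝ≥0) : ℝ)

/-- Fourier coefficient of a `2π`-periodic function `f : ℝ → ℂ`:
`f̂(k) = (1/2π) ∫_0^{2π} f(x) e^{-ikx} dx`. -/
noncomputable def fhat (f : ℝ → ℂ) (k : ℤ) : ℂ :=
  (Complex.ofReal (2 * Real.pi))⁻¹ *
    ∫ x in (0:ℝ)..(2 * Real.pi), f x * Complex.exp (-Complex.I * (k : ℂ) * (x : ℂ))

/-- The multilinear form
`Γ^(p)(M; f₁,…,f_{p+1}) = Σ_{k ∈ Z₀^(p)} M(k) ∏_{l=1}^{p+1} f̂_l(k_l)`,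
where `Z₀^(p) = {k ∈ ℤ^{p+1} : k₁ + ⋯ + k_{p+1} = 0}` (indices shifted to start at `0`). -/
noncomputable def Gam (p : ℕ) (M : (Fin (p + 1) → ℤ) → ℂ) (F : Fin (p + 1) → ℝ → ℂ) : ℂ :=
  ∑' k : {k : Fin (p + 1) → ℤ // (∑ i, k i) = 0}, M k.1 * ∏ i, fhat (F i) (k.1 i)

/-- The argument tuple `(f, …, f, g, g)`: `p − 1` copies of `f` followed by two copies of `g`. -/
def tup (p : ℕ) (f g : ℝ → ℂ) : Fin (p + 1) → ℝ → ℂ :=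
  fun i => if (i : ℕ) < p - 1 then f else g

/-- Sobolev norm `‖f‖_{H^s} = (Σ_k (1+k²)^s |f̂(k)|²)^{1/2}`. -/
noncomputable def hsNormC (s : ℕ) (f : ℝ → ℂ) : ℝ :=
  Real.sqrt (∑' k : ℤ, (1 + (k : ℝ) ^ 2) ^ s * ‖fhat f k‖ ^ 2)

/-- `‖∂_x^m f‖_{L²}² = Σ_k k^{2m} |f̂(k)|²`. -/
noncomputable def dxNormSq (m : ℕ) (f : ℝ → ℂ) : ℝ :=
  ∑' k : ℤ, (k : ℝ) ^ (2 * m) * ‖fhat f k‖ ^ 2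

/-- Complexification of a real-valued function. -/
def cF (f : ℝ → ℝ) : ℝ → ℂ := fun x => (f x : ℂ)

/-- `k_{(1,p-1)} = k₁ + ⋯ + k_{p-1}` (with indices shifted to start at `0`). -/
def ksum1 (p : ℕ) (k : Fin (p + 1) → ℤ) : ℤ :=
  ∑ i ∈ Finset.univ.filter (fun i : Fin (p + 1) => (i : ℕ) < p - 1), k i

/-- The high-frequency cut-off `M_H^(p)` with constant `C₀`:
`1` when `min{|k_p|^{4/5}, |k_{p+1}|^{4/5}} ≥ C₀ max{|k₁|,…,|k_{p-1}|}`, else `0`. -/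
noncomputable def MH (C₀ : ℝ) (p : ℕ) (k : Fin (p + 1) → ℤ) : ℂ :=
  if C₀ * fmax (Finset.univ.filter (fun i : Fin (p + 1) => (i : ℕ) < p - 1))
        (fun i => |(k i : ℝ)|)
      ≤ min (|(k (⟨p - 1, by omega⟩ : Fin (p + 1)) : ℝ)| ^ ((4:ℝ)/5))
            (|(k (Fin.last p) : ℝ)| ^ ((4:ℝ)/5))
  then 1 else 0

/-- The non-zero-sum cut-off `M_NZ^(p)`: `1` when `k_{(1,p-1)} ≠ 0`, else `0`. -/
def MNZ (p : ℕ) (k : Fin (p + 1) → ℤ) : ℂ :=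
  if ksum1 p k ≠ 0 then 1 else 0

/-- `D_{a,b,c}(k) = ∏_{l=1}^{a}(ik_l)³ ∏_{l=a+1}^{a+b}(ik_l)² ∏_{l=a+b+1}^{a+b+c}(ik_l)`. -/
noncomputable def Dabc (p a b c : ℕ) (k : Fin (p + 1) → ℤ) : ℂ :=
  (∏ i ∈ Finset.univ.filter (fun i : Fin (p + 1) => (i : ℕ) < a),
      (Complex.I * (k i : ℂ)) ^ 3)
    * (∏ i ∈ Finset.univ.filter (fun i : Fin (p + 1) => a ≤ (i : ℕ) ∧ (i : ℕ) < a + b),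
        (Complex.I * (k i : ℂ)) ^ 2)
    * (∏ i ∈ Finset.univ.filter
          (fun i : Fin (p + 1) => a + b ≤ (i : ℕ) ∧ (i : ℕ) < a + b + c),
        (Complex.I * (k i : ℂ)))

/-- The multiplier
`M_{NR} = M_H M_NZ λ ((s−3/2) a (ik_{(1,p-1)}) D_{a-1,b,c} + b D_{a,b-1,c})`
(the conventions for `a = 0` resp. `b = 0` are automatic since the corresponding
terms carry the factors `a` resp. `b`). -/
noncomputable def MNR (C₀ : ℝ) (s p : ℕ) (lam : ℝ) (a b c : ℕ)
    (k : Fin (p + 1) → ℤ) : ℂ :=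
  MH C₀ p k * MNZ p k * (lam : ℂ) *
    (((s : ℂ) - 3/2) * (a : ℂ) * (Complex.I * (ksum1 p k : ℂ)) * Dabc p (a - 1) b c k
      + (b : ℂ) * Dabc p a (b - 1) c k)

/-- `P_{N_j}(f) = (λ_j b_j/2π) ∫_𝕋 (∂_x³f)^{a_j}(∂_x²f)^{b_j-1}(∂_xf)^{c_j}f^{d_j} dx`. -/
noncomputable def PNj (lam : ℝ) (a b c d : ℕ) (f : ℝ → ℝ) : ℝ :=
  (lam * (b : ℝ) / (2 * Real.pi)) *
    ∫ x in (0:ℝ)..(2 * Real.pi),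
      (iteratedDeriv 3 f x) ^ a * (iteratedDeriv 2 f x) ^ (b - 1) *
        (deriv f x) ^ c * (f x) ^ d

theorem hasSum_pi_prod {𝕜 : Type*} [NormedField 𝕜] [CompleteSpace 𝕜] {ι : Type*} (n : ℕ)
    (u : Fin n → ι → 𝕜) (hu : ∀ i, Summable fun k => ‖u i k‖) :
    (Summable fun k : Fin n → ι => ‖∏ i, u i (k i)‖) ∧
      HasSum (fun k : Fin n → ι => ∏ i, u i (k i)) (∏ i, ∑' k, u i k) := by
  induction n with
  | zero =>
    refine ⟨(hasSum_fintype _).summable, ?_⟩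
    simp
  | succ n ih =>
    obtain ⟨h1, h2⟩ := ih (fun i => u i.succ) (fun i => hu i.succ)
    let e : ι × (Fin n → ι) ≃ (Fin (n + 1) → ι) := Fin.consEquiv fun _ => ι
    have key : ∀ q, ∏ i, u i (e q i) = u 0 q.1 * ∏ i, u i.succ (q.2 i) := fun q => by
      rw [Fin.prod_univ_succ]
      rfl
    have hs : Summable fun q : ι × (Fin n → ι) => ‖u 0 q.1 * ∏ i, u i.succ (q.2 i)‖ := by
      simp only [norm_mul]
      exact (hu 0).mul_of_nonneg h1 (fun _ => norm_nonneg _) (fun _ => norm_nonneg _)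
    constructor
    · refine (e.summable_iff (f := fun k : Fin (n + 1) → ι => ‖∏ i, u i (k i)‖)).1 ?_
      refine hs.congr fun q => ?_
      rw [Function.comp_apply, key q]
    · refine (e.hasSum_iff (f := fun k : Fin (n + 1) → ι => ∏ i, u i (k i))).1 ?_
      rw [Fin.prod_univ_succ, show (fun k : Fin (n + 1) → ι => ∏ i, u i (k i)) ∘ e = _ from
        funext key]
      have h3 : HasSum (u 0) (∑' k, u 0 k) := (hu 0).of_norm.hasSum
      have h4 : Summable fun q : ι × (Fin n → ι) => u 0 q.1 * ∏ i, u i.succ (q.2 i) := hs.of_norm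
      have h5 : ∀ (G : (Fin n → ι) → 𝕜) (t : 𝕜), HasSum G t →
          (Summable fun q : ι × (Fin n → ι) => u 0 q.1 * G q.2) →
          HasSum (fun q : ι × (Fin n → ι) => u 0 q.1 * G q.2) ((∑' k, u 0 k) * t) :=
        fun G t h6 h7 => h3.mul h6 h7
      have h6 := h5 (fun k => ∏ i, u i.succ (k i)) (∏ i : Fin n, ∑' k, u i.succ k)
      have h7 := h6 h2
      have h8 := h7 h4
      exact h8

/-- Smooth `2π`-periodic functions. -/
def SmoothPer (f : ℝ → ℝ) : Prop :=
  ContDiff ℝ (⊤ : ℕ∞) f ∧ Function.Periodic f (2 * Real.pi)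

theorem SmoothPer.deriv {f : ℝ → ℝ} (hf : SmoothPer f) : SmoothPer (deriv f) := by
  refine ⟨(contDiff_infty_iff_deriv.1 hf.1).2, fun x => ?_⟩
  rw [← deriv_comp_add_const]
  congr 1
  funext y
  exact hf.2 y

theorem SmoothPer.iteratedDeriv {f : ℝ → ℝ} (hf : SmoothPer f) (m : ℕ) :
    SmoothPer (iteratedDeriv m f) := by
  induction m with
  | zero => simpa using hf
  | succ m ih => rw [iteratedDeriv_succ]; exact ih.deriv

theorem SmoothPer.continuous {f : ℝ → ℝ} (hf : SmoothPer f) : Continuous f := hf.1.continuous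

theorem fhat_deriv {f : ℝ → ℝ} (hf : SmoothPer f) (k : ℤ) :
    fhat (cF (deriv f)) k = (Complex.I * k) * fhat (cF f) k := by
  have hd : ∀ x, HasDerivAt (cF f) (cF (deriv f) x) x := fun x =>
    (hf.1.differentiable (by simp) x).hasDerivAt.ofReal_comp
  have he : ∀ x : ℝ, HasDerivAt (fun x : ℝ => Complex.exp (-Complex.I * (k : ℂ) * (x : ℂ)))
      (Complex.exp (-Complex.I * (k : ℂ) * (x : ℂ)) * (-Complex.I * k)) x := fun x => by
    have h1 : HasDerivAt (fun x : ℝ => -Complex.I * (k : ℂ) * (x : ℂ)) (-Complex.I * k) x := by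
      simpa using (Complex.ofRealCLM.hasDerivAt (x := x)).const_mul (-Complex.I * (k : ℂ))
    exact h1.cexp
  have hc : Continuous (cF (deriv f)) := Complex.continuous_ofReal.comp hf.deriv.continuous
  have hp := intervalIntegral.integral_deriv_mul_eq_sub_of_hasDerivAt
    (a := 0) (b := 2 * Real.pi) (u := cF f) (fun x _ => (hd x).continuousAt.continuousWithinAt)
    (fun x _ => (he x).continuousAt.continuousWithinAt) (fun x _ => hd x) (fun x _ => he x)
    (hc.intervalIntegrable _ _) (Continuous.intervalIntegrable (by fun_prop) _ _)
  have hcf : Continuous (cF f) := Complex.continuous_ofReal.comp hf.continuous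
  have e2 : Complex.exp (-Complex.I * (k : ℂ) * ((2 * Real.pi : ℝ) : ℂ)) = 1 := by
    rw [Complex.exp_eq_one_iff]
    exact ⟨-k, by push_cast; ring⟩
  have f2 : cF f (2 * Real.pi) = cF f 0 := by
    have := hf.2 0
    simp only [zero_add] at this
    simp [cF, this]
  rw [e2, f2] at hp
  rw [intervalIntegral.integral_add (Continuous.intervalIntegrable (by fun_prop) _ _)
    (Continuous.intervalIntegrable (by fun_prop) _ _)] at hp
  have h3 : ∫ x in (0:ℝ)..(2 * Real.pi), cF f x *
      (Complex.exp (-Complex.I * (k : ℂ) * (x : ℂ)) * (-Complex.I * k)) =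
      (∫ x in (0:ℝ)..(2 * Real.pi), cF f x * Complex.exp (-Complex.I * (k : ℂ) * (x : ℂ)))
        * (-Complex.I * k) := by
    rw [← intervalIntegral.integral_mul_const]
    simp only [mul_assoc]
  rw [h3] at hp
  simp only [Complex.ofReal_zero, mul_zero, Complex.exp_zero, mul_one, sub_self] at hp
  rw [fhat, fhat, eq_neg_of_add_eq_zero_left hp]
  ring

theorem fhat_iteratedDeriv {f : ℝ → ℝ} (hf : SmoothPer f) (m : ℕ) (k : ℤ) :
    fhat (cF (iteratedDeriv m f)) k = (Complex.I * k) ^ m * fhat (cF f) k := by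
  induction m with
  | zero => simp
  | succ m ih =>
    rw [iteratedDeriv_succ, fhat_deriv (hf.iteratedDeriv m), ih, pow_succ']
    ring

theorem norm_fhat_le (f : ℝ → ℝ) : ∃ B, ∀ k, ‖fhat (cF f) k‖ ≤ B := by
  refine ⟨‖(Complex.ofReal (2 * Real.pi))⁻¹‖ * ∫ x in (0:ℝ)..(2 * Real.pi), ‖cF f x‖,
    fun k => ?_⟩
  rw [fhat, norm_mul]
  refine mul_le_mul_of_nonneg_left ?_ (norm_nonneg _)
  refine (intervalIntegral.norm_integral_le_integral_norm (by positivity)).trans_eq ?_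
  congr 1
  funext x
  rw [norm_mul, show -Complex.I * (k : ℂ) * (x : ℂ) = ((-(k * x) : ℝ) : ℂ) * Complex.I by
    push_cast; ring, Complex.norm_exp_ofReal_mul_I, mul_one]

theorem fhat_neg (f : ℝ → ℝ) (k : ℤ) :
    fhat (cF f) (-k) = (starRingEnd ℂ) (fhat (cF f) k) := by
  rw [fhat, fhat, map_mul, map_inv₀, Complex.conj_ofReal, intervalIntegral.integral_of_le
    (by positivity), intervalIntegral.integral_of_le (by positivity), ← integral_conj]
  congr 2
  funext x
  simp [cF, ← Complex.exp_conj]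

/-- The Japanese bracket `(1 + k²)^{1/2}`. -/
noncomputable def jap (k : ℤ) : ℝ := Real.sqrt (1 + (k : ℝ) ^ 2)

theorem jap_sq (k : ℤ) : jap k ^ 2 = 1 + (k : ℝ) ^ 2 := Real.sq_sqrt (by positivity)

theorem one_le_jap (k : ℤ) : 1 ≤ jap k :=
  Real.one_le_sqrt.2 (by nlinarith [sq_nonneg (k : ℝ)])

theorem jap_nonneg (k : ℤ) : 0 ≤ jap k := Real.sqrt_nonneg _

theorem abs_le_jap (k : ℤ) : |(k : ℝ)| ≤ jap k := Real.abs_le_sqrt (by linarith)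

theorem summable_inv_jap_sq : Summable fun k : ℤ => (jap k ^ 2)⁻¹ := by
  have h : Summable fun k : ℤ => ((k : ℝ) ^ 2)⁻¹ := by
    simpa using (Real.summable_one_div_int_pow (p := 2)).2 one_lt_two
  refine Summable.of_norm_bounded_eventually h ?_
  rw [Filter.eventually_cofinite]
  refine (Set.finite_singleton (0 : ℤ)).subset fun k hk => ?_
  by_contra hne
  refine hk ?_
  have : 0 < (k : ℝ) ^ 2 := by
    have : (k : ℝ) ≠ 0 := by exact_mod_cast hne
    positivity
  rw [jap_sq, Real.norm_of_nonneg (by positivity)]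
  exact inv_anti₀ this (by linarith)

theorem jap_pow_fhat_bounded {f : ℝ → ℝ} (hf : SmoothPer f) (m : ℕ) :
    ∃ B, ∀ k, jap k ^ m * ‖fhat (cF f) k‖ ≤ B := by
  obtain ⟨B₀, h₀⟩ := norm_fhat_le f
  obtain ⟨B₁, h₁⟩ := norm_fhat_le (iteratedDeriv m f)
  refine ⟨2 ^ m * (B₀ + B₁), fun k => ?_⟩
  have h2 := h₁ k
  rw [fhat_iteratedDeriv hf, norm_mul, norm_pow, norm_mul, Complex.norm_I, one_mul,
    Complex.norm_intCast] at h2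
  have h3 : jap k ^ m ≤ 2 ^ m * (1 + |(k : ℝ)| ^ m) := by
    have : jap k ≤ 2 * max 1 |(k : ℝ)| := by
      refine Real.sqrt_le_iff.2 ⟨by positivity, ?_⟩
      have e1 := le_max_left 1 |(k : ℝ)|
      have e2 := le_max_right 1 |(k : ℝ)|
      nlinarith [sq_abs (k : ℝ), abs_nonneg (k : ℝ)]
    calc jap k ^ m ≤ (2 * max 1 |(k : ℝ)|) ^ m := pow_le_pow_left₀ (jap_nonneg k) this m
      _ = 2 ^ m * (max 1 |(k : ℝ)|) ^ m := mul_pow _ _ _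
      _ ≤ 2 ^ m * (1 + |(k : ℝ)| ^ m) := by
        refine mul_le_mul_of_nonneg_left ?_ (by positivity)
        rcases max_choice 1 |(k : ℝ)| with h | h <;> rw [h]
        · simp
        · simp
  calc jap k ^ m * ‖fhat (cF f) k‖ ≤ 2 ^ m * (1 + |(k : ℝ)| ^ m) * ‖fhat (cF f) k‖ :=
        mul_le_mul_of_nonneg_right h3 (norm_nonneg _)
    _ = 2 ^ m * (‖fhat (cF f) k‖ + |(k : ℝ)| ^ m * ‖fhat (cF f) k‖) := by ring
    _ ≤ _ := mul_le_mul_of_nonneg_left (add_le_add (h₀ k) h2) (by positivity)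

theorem summable_jap_pow_fhat {f : ℝ → ℝ} (hf : SmoothPer f) (m : ℕ) :
    Summable fun k => jap k ^ m * ‖fhat (cF f) k‖ := by
  obtain ⟨B, hB⟩ := jap_pow_fhat_bounded hf (m + 2)
  refine Summable.of_nonneg_of_le
    (fun k => mul_nonneg (pow_nonneg (jap_nonneg k) _) (norm_nonneg _)) (fun k => ?_)
    (summable_inv_jap_sq.mul_left B)
  have h0 : 0 < jap k ^ 2 := by rw [jap_sq]; positivity
  rw [← div_eq_mul_inv, le_div_iff₀ h0]
  refine le_trans (le_of_eq ?_) (hB k)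
  ring

theorem summable_fhat {f : ℝ → ℝ} (hf : SmoothPer f) : Summable fun k => ‖fhat (cF f) k‖ := by
  simpa using summable_jap_pow_fhat hf 0

theorem summable_jap_pow_fhat_sq {f : ℝ → ℝ} (hf : SmoothPer f) (m : ℕ) :
    Summable fun k : ℤ => (1 + (k : ℝ) ^ 2) ^ m * ‖fhat (cF f) k‖ ^ 2 := by
  obtain ⟨B, hB⟩ := norm_fhat_le f
  refine Summable.of_nonneg_of_le (fun k => by positivity) (fun k => ?_)
    ((summable_jap_pow_fhat hf (2 * m)).mul_right B)
  rw [← jap_sq, ← pow_mul, sq, ← mul_assoc]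
  exact mul_le_mul_of_nonneg_left (hB k)
    (mul_nonneg (pow_nonneg (jap_nonneg k) _) (norm_nonneg _))

theorem hasSum_fhat {f : ℝ → ℝ} (hf : SmoothPer f) (x : ℝ) :
    HasSum (fun k : ℤ => fhat (cF f) k * Complex.exp (Complex.I * k * x)) (f x : ℂ) := by
  have : Fact (0 < 2 * Real.pi) := ⟨by positivity⟩
  have hper : Function.Periodic (cF f) (2 * Real.pi) := fun x => by simp [cF, hf.2 x]
  have hcf : Continuous (cF f) := Complex.continuous_ofReal.comp hf.continuous
  let F : C(AddCircle (2 * Real.pi), ℂ) := ⟨hper.lift, by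
    exact continuous_coinduced_dom.mpr hcf⟩
  have hF : ∀ x : ℝ, F (x : AddCircle (2 * Real.pi)) = cF f x := fun x => rfl
  have hcoef : ∀ k, fourierCoeff F k = fhat (cF f) k := fun k => by
    rw [fourierCoeff_eq_intervalIntegral F k 0, fhat, zero_add, Complex.real_smul]
    congr 1
    · push_cast; simp
    · refine intervalIntegral.integral_congr fun x _ => ?_
      simp only [hF, smul_eq_mul, fourier_coe_apply]
      rw [mul_comm]
      congr 2
      have : (Real.pi : ℂ) ≠ 0 := by exact_mod_cast Real.pi_ne_zero
      push_cast
      field_simp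
  have hs : Summable (fourierCoeff F) := by
    refine Summable.of_norm ?_
    simp only [hcoef]
    exact summable_fhat hf
  have := has_pointwise_sum_fourier_series_of_summable hs (x : AddCircle (2 * Real.pi))
  rw [hF] at this
  change HasSum _ (cF f x)
  convert this using 2 with k
  rw [hcoef, smul_eq_mul, fourier_coe_apply]
  congr 2
  have : (Real.pi : ℂ) ≠ 0 := by exact_mod_cast Real.pi_ne_zero
  push_cast
  field_simp

theorem integral_exp_int (m : ℤ) :
    ∫ x in (0:ℝ)..(2 * Real.pi), Complex.exp (Complex.I * m * x) =
      if m = 0 then ((2 * Real.pi : ℝ) : ℂ) else 0 := by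
  split_ifs with h
  · simp [h]
  · rw [integral_exp_mul_complex (by simpa using h)]
    have : Complex.exp (Complex.I * m * ((2 * Real.pi : ℝ) : ℂ)) = 1 := by
      rw [Complex.exp_eq_one_iff]
      exact ⟨m, by push_cast; ring⟩
    rw [this]
    simp

/-- The mean value of a product of derivatives of `f`, as a sum over frequencies adding to `0`. -/
theorem mean_prod_iteratedDeriv {f : ℝ → ℝ} (hf : SmoothPer f) (n : ℕ) (e : Fin n → ℕ) :
    ((2 * Real.pi : ℝ) : ℂ)⁻¹ *
        ∫ x in (0:ℝ)..(2 * Real.pi), ∏ i, ((iteratedDeriv (e i) f x : ℝ) : ℂ) =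
      ∑' k : Fin n → ℤ, if ∑ i, k i = 0 then
        ∏ i, ((Complex.I * (k i : ℂ)) ^ e i * fhat (cF f) (k i)) else 0 := by
  have hu : ∀ i, Summable fun k => ‖fhat (cF (iteratedDeriv (e i) f)) k‖ := fun i =>
    summable_fhat (hf.iteratedDeriv _)
  have hexp : ∀ (k : ℤ) (x : ℝ), ‖Complex.exp (Complex.I * k * x)‖ = 1 := fun k x => by
    rw [show Complex.I * (k : ℂ) * (x : ℂ) = ((k * x : ℝ) : ℂ) * Complex.I by
      push_cast; ring, Complex.norm_exp_ofReal_mul_I]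
  have hx : ∀ x : ℝ, HasSum (fun k : Fin n → ℤ => ∏ i,
      (fhat (cF (iteratedDeriv (e i) f)) (k i) * Complex.exp (Complex.I * k i * x)))
      (∏ i, ((iteratedDeriv (e i) f x : ℝ) : ℂ)) := fun x => by
    have h1 := (hasSum_pi_prod n (fun i (k : ℤ) =>
      fhat (cF (iteratedDeriv (e i) f)) k * Complex.exp (Complex.I * k * x)) (fun i => by
        simpa [norm_mul, hexp] using hu i)).2
    simpa only [(hasSum_fhat (hf.iteratedDeriv _) x).tsum_eq] using h1
  have h0 := (hasSum_pi_prod n (fun i => fhat (cF (iteratedDeriv (e i) f))) hu).1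
  have key := intervalIntegral.hasSum_integral_of_dominated_convergence
    (μ := MeasureTheory.volume) (a := 0) (b := 2 * Real.pi)
    (F := fun (k : Fin n → ℤ) (x : ℝ) => ∏ i,
      (fhat (cF (iteratedDeriv (e i) f)) (k i) * Complex.exp (Complex.I * k i * x)))
    (fun k _ => ‖∏ i, fhat (cF (iteratedDeriv (e i) f)) (k i)‖)
    (fun k => Continuous.aestronglyMeasurable (by fun_prop))
    (fun k => .of_forall fun x _ => le_of_eq (by
      rw [Finset.prod_mul_distrib, norm_mul, 
        norm_prod Finset.univ (fun i => Complex.exp (Complex.I * k i * x))]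
      simp [hexp]))
    (.of_forall fun x _ => h0) intervalIntegrable_const
    (.of_forall fun x _ => hx x)
  rw [← key.tsum_eq, ← tsum_mul_left]
  congr 1
  funext k
  have h2 : ∀ x : ℝ, ∏ i,
      (fhat (cF (iteratedDeriv (e i) f)) (k i) * Complex.exp (Complex.I * k i * x)) =
      (∏ i, fhat (cF (iteratedDeriv (e i) f)) (k i)) *
        Complex.exp (Complex.I * ((∑ i, k i : ℤ) : ℂ) * x) := fun x => by
    rw [Finset.prod_mul_distrib, ← Complex.exp_sum, ← Finset.sum_mul, ← Finset.mul_sum]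
    push_cast
    rfl
  simp only [h2]
  rw [intervalIntegral.integral_const_mul, integral_exp_int]
  simp only [fhat_iteratedDeriv hf]
  split_ifs
  · have : ((2 * Real.pi : ℝ) : ℂ) ≠ 0 := by
      exact_mod_cast (by positivity : (2 * Real.pi : ℝ) ≠ 0)
    field_simp
  · simp

/-- The order of the derivative carried by the `i`-th factor of `D_{a,b,c}`. -/
def derivOrder (a b c i : ℕ) : ℕ :=
  if i < a then 3 else if i < a + b then 2 else if i < a + b + c then 1 else 0

theorem derivOrder_le (a b c i : ℕ) : derivOrder a b c i ≤ 3 := by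
  unfold derivOrder
  split_ifs <;> norm_num

theorem prod_derivOrder {R : Type*} [CommMonoid R] (v : ℕ → R) (a b c d : ℕ) :
    ∏ i : Fin (a + b + c + d), v (derivOrder a b c i) =
      v 3 ^ a * v 2 ^ b * v 1 ^ c * v 0 ^ d := by
  rw [Fin.prod_univ_eq_prod_range (fun i => v (derivOrder a b c i)), Finset.prod_range_add,
    Finset.prod_range_add, Finset.prod_range_add]
  congr 1
  congr 1
  congr 1
  · rw [Finset.prod_congr rfl (g := fun _ => v 3)]
    · simp
    · intro i hi
      rw [Finset.mem_range] at hi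
      simp [derivOrder, hi]
  · rw [Finset.prod_congr rfl (g := fun _ => v 2)]
    · simp
    · intro i hi
      rw [Finset.mem_range] at hi
      simp [derivOrder, hi]
  · rw [Finset.prod_congr rfl (g := fun _ => v 1)]
    · simp
    · intro i hi
      rw [Finset.mem_range] at hi
      rw [derivOrder, if_neg (by omega), if_neg (by omega), if_pos (by omega)]
  · rw [Finset.prod_congr rfl (g := fun _ => v 0)]
    · simp
    · intro i _
      rw [derivOrder, if_neg (by omega), if_neg (by omega), if_neg (by omega)]

theorem Dabc_eq_prod (n a b c : ℕ) (h : a + b + c ≤ n) (k : Fin (n + 1 + 1) → ℤ) :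
    Dabc (n + 1) a b c k =
      ∏ i : Fin n, (Complex.I * (k i.castSucc.castSucc : ℂ)) ^ derivOrder a b c i := by
  have : Dabc (n + 1) a b c k =
      ∏ i : Fin (n + 1 + 1), (Complex.I * (k i : ℂ)) ^ derivOrder a b c i := by
    rw [Dabc, Finset.prod_filter, Finset.prod_filter, Finset.prod_filter,
      ← Finset.prod_mul_distrib, ← Finset.prod_mul_distrib]
    refine Finset.prod_congr rfl fun i _ => ?_
    unfold derivOrder
    by_cases h1 : (i : ℕ) < a
    · simp [h1, show ¬ a ≤ (i : ℕ) by omega, show ¬ a + b ≤ (i : ℕ) by omega]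
    · by_cases h2 : (i : ℕ) < a + b
      · simp [h1, h2, show a ≤ (i : ℕ) by omega]
      · by_cases h3 : (i : ℕ) < a + b + c
        · simp [h1, h2, h3, show a + b ≤ (i : ℕ) by omega]
        · simp [h1, h2, h3]
  rw [this, Fin.prod_univ_castSucc, Fin.prod_univ_castSucc]
  have h1 : derivOrder a b c (Fin.last n).castSucc = 0 := by
    simp only [Fin.val_castSucc, Fin.val_last]
    rw [derivOrder, if_neg (by omega), if_neg (by omega), if_neg (by omega)]
  have h2 : derivOrder a b c (Fin.last (n + 1)) = 0 := by
    simp only [Fin.val_last]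
    rw [derivOrder, if_neg (by omega), if_neg (by omega), if_neg (by omega)]
  rw [h1, h2]
  simp

theorem PNj_eq_tsum {f : ℝ → ℝ} (hf : SmoothPer f) (lam : ℝ) (a b c d n : ℕ)
    (hn : n = a + (b - 1) + c + d) :
    ((PNj lam a b c d f : ℝ) : ℂ) = lam * b * ∑' k : Fin n → ℤ, if ∑ i, k i = 0 then
        ∏ i, ((Complex.I * (k i : ℂ)) ^ derivOrder a (b - 1) c i * fhat (cF f) (k i)) else 0 := by
  rw [← mean_prod_iteratedDeriv hf n (fun i => derivOrder a (b - 1) c i), PNj]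
  subst hn
  push_cast
  rw [← intervalIntegral.integral_ofReal, div_eq_mul_inv]
  push_cast
  rw [mul_assoc]
  congr 2
  refine intervalIntegral.integral_congr fun x _ => ?_
  rw [prod_derivOrder (fun m => ((iteratedDeriv m f x : ℝ) : ℂ))]
  simp [iteratedDeriv_one]

theorem hsNormC_nonneg (s : ℕ) (f : ℝ → ℂ) : 0 ≤ hsNormC s f := Real.sqrt_nonneg _

theorem tsum_jap_pow_fhat_le {f : ℝ → ℝ} (hf : SmoothPer f) (m : ℕ) :
    ∑' k, jap k ^ m * ‖fhat (cF f) k‖ ≤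
      Real.sqrt (∑' k, (jap k ^ 2)⁻¹) * hsNormC (m + 1) (cF f) := by
  have hpos : ∀ k, 0 < jap k := fun k => one_pos.trans_le (one_le_jap k)
  have e1 : ∀ k, ((jap k)⁻¹) ^ (2 : ℝ) = (jap k ^ 2)⁻¹ := fun k => by
    rw [Real.rpow_two, inv_pow]
  have e2 : ∀ k : ℤ, (jap k ^ (m + 1) * ‖fhat (cF f) k‖) ^ (2 : ℝ) =
      (1 + (k : ℝ) ^ 2) ^ (m + 1) * ‖fhat (cF f) k‖ ^ 2 := fun k => by
    rw [Real.rpow_two, mul_pow, ← jap_sq, ← pow_mul, ← pow_mul, mul_comm (m + 1) 2]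
  have h := (Real.summable_and_inner_le_Lp_mul_Lq_tsum_of_nonneg Real.HolderConjugate.two_two
    (f := fun k => (jap k)⁻¹) (g := fun k => jap k ^ (m + 1) * ‖fhat (cF f) k‖)
    (fun k => inv_nonneg.2 (jap_nonneg k))
    (fun k => mul_nonneg (pow_nonneg (jap_nonneg k) _) (norm_nonneg _))
    (by simpa only [e1] using summable_inv_jap_sq)
    (by simpa only [e2] using summable_jap_pow_fhat_sq hf (m + 1))).2
  simp only [e1, e2, ← Real.sqrt_eq_rpow] at h
  refine le_trans (le_of_eq ?_) h
  congr 1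
  funext k
  have := (hpos k).ne'
  field_simp
  ring

/-- Outside the region of high frequencies, the product of the two last frequencies is controlled
by the largest of the others. -/
theorem abs_mul_abs_le_of_not_high {n : ℕ} (C₀ : ℝ) (hC₀ : 0 < C₀) (k : Fin n → ℤ) (l l' : ℤ)
    (hl : l' = -(∑ i, k i) - l) (hk : ∑ i, k i ≠ 0) (m : Fin n)
    (hm : ∀ i, |(k i : ℝ)| ≤ |(k m : ℝ)|)
    (hlow : min (|(l : ℝ)| ^ ((4:ℝ)/5)) (|(l' : ℝ)| ^ ((4:ℝ)/5)) < C₀ * |(k m : ℝ)|) :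
    |(l : ℝ)| * |(l' : ℝ)| ≤ (n + C₀ ^ ((5:ℝ)/4)) ^ 2 * |(k m : ℝ)| ^ 3 := by
  set K := |(k m : ℝ)| with hK
  have hS : |((∑ i, k i : ℤ) : ℝ)| ≤ n * K := by
    push_cast
    refine (Finset.abs_sum_le_sum_abs _ _).trans ((Finset.sum_le_sum fun i _ => hm i).trans ?_)
    simp
  have hK1 : 1 ≤ K := by
    have : k m ≠ 0 := by
      intro h0
      rw [hK, h0] at hm
      refine hk (Finset.sum_eq_zero fun i _ => ?_)
      have := hm i
      simpa using this
    rw [hK]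
    exact_mod_cast Int.one_le_abs this
  have hK0 : 0 ≤ K := by linarith
  set X := K ^ ((5:ℝ)/4) with hX
  have hKX : K ≤ X := by
    conv_lhs => rw [← Real.rpow_one K]
    exact Real.rpow_le_rpow_of_exponent_le hK1 (by norm_num)
  have hXX : X ^ 2 ≤ K ^ 3 := by
    rw [hX, ← Real.rpow_natCast, ← Real.rpow_mul hK0, ← Real.rpow_natCast]
    exact Real.rpow_le_rpow_of_exponent_le hK1 (by norm_num)
  set c := C₀ ^ ((5:ℝ)/4) with hc
  have hc0 : 0 < c := Real.rpow_pos_of_pos hC₀ _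
  have hX0 : 0 ≤ X := hK0.trans hKX
  have single : ∀ y : ℤ, |(y : ℝ)| ^ ((4:ℝ)/5) < C₀ * K → |(y : ℝ)| ≤ c * X := fun y hy => by
    have := Real.rpow_le_rpow (by positivity) hy.le (by norm_num : (0:ℝ) ≤ 5 / 4)
    rw [← Real.rpow_mul (abs_nonneg _), Real.mul_rpow hC₀.le hK0] at this
    norm_num at this
    exact this
  have other : ∀ y y' : ℤ, y' = -(∑ i, k i) - y → |(y : ℝ)| ≤ c * X →
      |(y' : ℝ)| ≤ (n + c) * X := fun y y' hy h => by
    have h1 : (y' : ℝ) = -((∑ i, k i : ℤ) : ℝ) - y := by rw [hy]; push_cast; ring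
    have h2 : |(y' : ℝ)| ≤ |((∑ i, k i : ℤ) : ℝ)| + |(y : ℝ)| := by
      rw [h1]
      refine (abs_sub _ _).trans_eq ?_
      rw [abs_neg]
    have h3 : (n : ℝ) * K ≤ n * X := mul_le_mul_of_nonneg_left hKX (by positivity)
    linarith
  have hn : c * X ≤ (n + c) * X :=
    mul_le_mul_of_nonneg_right (le_add_of_nonneg_left n.cast_nonneg) hX0
  have both : |(l : ℝ)| ≤ (n + c) * X ∧ |(l' : ℝ)| ≤ (n + c) * X := by
    rcases min_lt_iff.1 hlow with h | h
    · exact ⟨(single l h).trans hn, other l l' hl (single l h)⟩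
    · exact ⟨other l' l (by rw [hl]; ring) (single l' h), (single l' h).trans hn⟩
  calc |(l : ℝ)| * |(l' : ℝ)| ≤ ((n + c) * X) * ((n + c) * X) :=
        mul_le_mul both.1 both.2 (abs_nonneg _) (by positivity)
    _ = (n + c) ^ 2 * X ^ 2 := by ring
    _ ≤ _ := mul_le_mul_of_nonneg_left hXX (by positivity)

/-- Coordinates on `Z₀^(n+1)`: the first `n + 1` frequencies determine the last one. -/
def zeroSumEquiv (n : ℕ) :
    (Fin n → ℤ) × ℤ ≃ {k : Fin (n + 1 + 1) → ℤ // (∑ i, k i) = 0} where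
  toFun q := ⟨Fin.snoc (α := fun _ => ℤ) (Fin.snoc (α := fun _ => ℤ) q.1 q.2)
    (-(∑ i, q.1 i) - q.2), by
      rw [Fin.sum_univ_castSucc, Fin.sum_univ_castSucc]
      simp⟩
  invFun k := (fun i => k.1 i.castSucc.castSucc, k.1 (Fin.last n).castSucc)
  left_inv q := by simp
  right_inv k := by
    have h := k.2
    rw [Fin.sum_univ_castSucc, Fin.sum_univ_castSucc] at h
    ext i
    refine Fin.lastCases ?_ (fun i => ?_) i
    · simp only [Fin.snoc_last]
      linarith
    · refine Fin.lastCases ?_ (fun i => ?_) i <;> simp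

section coordinates

variable (n : ℕ) (q : (Fin n → ℤ) × ℤ)

@[simp]
theorem zeroSumEquiv_castSucc (i : Fin n) :
    (zeroSumEquiv n q).1 i.castSucc.castSucc = q.1 i := by
  simp [zeroSumEquiv]

@[simp]
theorem zeroSumEquiv_penultimate :
    (zeroSumEquiv n q).1 (Fin.last n).castSucc = q.2 := by
  simp [zeroSumEquiv]

@[simp]
theorem zeroSumEquiv_last :
    (zeroSumEquiv n q).1 (Fin.last (n + 1)) = -(∑ i, q.1 i) - q.2 := by
  simp [zeroSumEquiv]

theorem ksum1_zeroSumEquiv : ksum1 (n + 1) (zeroSumEquiv n q).1 = ∑ i, q.1 i := by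
  rw [ksum1, Finset.sum_filter, Fin.sum_univ_castSucc, Fin.sum_univ_castSucc]
  simp

theorem Gam_eq_tsum (M : (Fin (n + 1 + 1) → ℤ) → ℂ) (f g : ℝ → ℂ) :
    Gam (n + 1) M (tup (n + 1) f g) = ∑' q : (Fin n → ℤ) × ℤ, M (zeroSumEquiv n q).1 *
      ((∏ i, fhat f (q.1 i)) * (fhat g q.2 * fhat g (-(∑ i, q.1 i) - q.2))) := by
  rw [Gam, ← (zeroSumEquiv n).tsum_eq]
  congr 1
  funext q
  rw [Fin.prod_univ_castSucc, Fin.prod_univ_castSucc]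
  simp [tup, mul_assoc]

end coordinates

theorem fmax_le {α : Type*} (s : Finset α) (f : α → ℝ) {B : ℝ} (hB : 0 ≤ B)
    (h : ∀ i ∈ s, f i ≤ B) : fmax s f ≤ B := by
  rw [fmax, ← NNReal.coe_mk B hB, NNReal.coe_le_coe]
  refine Finset.sup_le fun i hi => ?_
  rw [Real.toNNReal_le_iff_le_coe]
  exact h i hi

theorem min_lt_of_MH_ne_one {C₀ : ℝ} (hC₀ : 0 < C₀) (n : ℕ) (q : (Fin n → ℤ) × ℤ) (m : Fin n)
    (hm : ∀ i, |(q.1 i : ℝ)| ≤ |(q.1 m : ℝ)|) (h : MH C₀ (n + 1) (zeroSumEquiv n q).1 ≠ 1) :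
    min (|(q.2 : ℝ)| ^ ((4:ℝ)/5)) (|((-(∑ i, q.1 i) - q.2 : ℤ) : ℝ)| ^ ((4:ℝ)/5)) <
      C₀ * |(q.1 m : ℝ)| := by
  by_contra! hle
  refine h (if_pos ?_)
  have h1 : (zeroSumEquiv n q).1 ⟨n + 1 - 1, by omega⟩ = q.2 := zeroSumEquiv_penultimate n q
  rw [h1, zeroSumEquiv_last]
  refine le_trans (mul_le_mul_of_nonneg_left (fmax_le _ _ (abs_nonneg _) fun i hi => ?_) hC₀.le)
    hle
  have hi' : (i : ℕ) < n := by simpa using hi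
  have : i = (⟨i, hi'⟩ : Fin n).castSucc.castSucc := rfl
  rw [this, zeroSumEquiv_castSucc]
  exact hm _

theorem MH_eq_zero_or_one (C₀ : ℝ) (p : ℕ) (k : Fin (p + 1) → ℤ) :
    MH C₀ p k = 0 ∨ MH C₀ p k = 1 := by
  unfold MH
  split_ifs <;> simp

/-- Replacing the first of the two last frequencies by the second. -/
def swapEquiv (n : ℕ) : (Fin n → ℤ) × ℤ ≃ (Fin n → ℤ) × ℤ :=
  Function.Involutive.toPerm (fun q => (q.1, -(∑ i, q.1 i) - q.2)) fun q => by simp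

theorem hasSum_bilinear {n : ℕ} {Q : (Fin n → ℤ) → ℝ} {G : ℤ → ℝ} (hQ : ∀ k, 0 ≤ Q k)
    (hG : ∀ l, 0 ≤ G l) {A B : ℝ} (hQs : HasSum Q A) (hGs : HasSum G B) :
    HasSum (fun q : (Fin n → ℤ) × ℤ => Q q.1 * ((G q.2 + G (-(∑ i, q.1 i) - q.2)) / 2))
      (A * B) := by
  have h1 : HasSum (fun q : (Fin n → ℤ) × ℤ => Q q.1 * G q.2) (A * B) :=
    hQs.mul hGs (hQs.summable.mul_of_nonneg hGs.summable hQ hG)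
  have h2 : HasSum (fun q : (Fin n → ℤ) × ℤ => Q q.1 * G (-(∑ i, q.1 i) - q.2)) (A * B) :=
    (swapEquiv n).hasSum_iff.2 h1
  have h3 := (h1.add h2).div_const 2
  rw [add_self_div_two] at h3
  have hfun : (fun q : (Fin n → ℤ) × ℤ => Q q.1 * ((G q.2 + G (-(∑ i, q.1 i) - q.2)) / 2)) =
      fun q => (Q q.1 * G q.2 + Q q.1 * G (-(∑ i, q.1 i) - q.2)) / 2 := by
    funext q
    ring
  rw [hfun]
  exact h3

section terms

variable (s n : ℕ) (e : Fin n → ℕ) (f g : ℝ → ℝ)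

/-- The summand of the quasilinear form, in the coordinates of `zeroSumEquiv`. -/
noncomputable def gamTerm (q : (Fin n → ℤ) × ℤ) : ℂ :=
  (∏ i, ((Complex.I * (q.1 i : ℂ)) ^ e i * fhat (cF f) (q.1 i))) *
    (((Complex.I * (q.2 : ℂ)) ^ (s + 1) * fhat (cF g) q.2) *
      ((Complex.I * ((-(∑ i, q.1 i) - q.2 : ℤ) : ℂ)) ^ (s + 1) *
        fhat (cF g) (-(∑ i, q.1 i) - q.2)))

/-- The weights `(1 + k_m²)³ ∏ (1 + k_i²)^{3/2}` applied to `∏ |f̂(k_i)|`. -/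
noncomputable def lossWeight (m : Fin n) (k : Fin n → ℤ) : ℝ :=
  ∏ i, (jap (k i) ^ (if i = m then 6 else 3) * ‖fhat (cF f) (k i)‖)

variable {e f g}

theorem norm_symbol (m : ℕ) (k : ℤ) (z : ℂ) :
    ‖(Complex.I * (k : ℂ)) ^ m * z‖ = |(k : ℝ)| ^ m * ‖z‖ := by
  simp

theorem norm_symbol_le (m : ℕ) (k : ℤ) (z : ℂ) :
    ‖(Complex.I * (k : ℂ)) ^ m * z‖ ≤ jap k ^ m * ‖z‖ := by
  rw [norm_symbol]
  exact mul_le_mul_of_nonneg_right (pow_le_pow_left₀ (abs_nonneg _) (abs_le_jap k) m)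
    (norm_nonneg _)

theorem norm_prod_symbol_le (he : ∀ i, e i ≤ 3) (k : Fin n → ℤ) :
    ‖∏ i, ((Complex.I * (k i : ℂ)) ^ e i * fhat (cF f) (k i))‖ ≤
      ∏ i, (jap (k i) ^ 3 * ‖fhat (cF f) (k i)‖) := by
  rw [norm_prod]
  refine Finset.prod_le_prod (fun i _ => norm_nonneg _) fun i _ => ?_
  exact (norm_symbol_le _ _ _).trans (mul_le_mul_of_nonneg_right
    (pow_le_pow_right₀ (one_le_jap _) (he i)) (norm_nonneg _))

theorem summable_norm_prod_symbol (he : ∀ i, e i ≤ 3) (hf : SmoothPer f) :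
    Summable fun k : Fin n → ℤ => ‖∏ i, ((Complex.I * (k i : ℂ)) ^ e i * fhat (cF f) (k i))‖ := by
  refine Summable.of_nonneg_of_le (fun _ => norm_nonneg _) (norm_prod_symbol_le n he) ?_
  refine (hasSum_pi_prod n (fun _ k => jap k ^ 3 * ‖fhat (cF f) k‖) fun _ => ?_).2.summable
  exact (summable_jap_pow_fhat hf 3).norm

theorem summable_norm_gamTerm (he : ∀ i, e i ≤ 3) (hf : SmoothPer f) (hg : SmoothPer g) :
    Summable fun q => ‖gamTerm s n e f g q‖ := by
  obtain ⟨B, hB⟩ := jap_pow_fhat_bounded hg (s + 1)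
  have h1 := (summable_norm_prod_symbol n he hf).mul_of_nonneg
    ((summable_jap_pow_fhat hg (s + 1)).mul_right B) (fun _ => norm_nonneg _) fun k =>
      mul_nonneg (mul_nonneg (pow_nonneg (jap_nonneg k) _) (norm_nonneg _))
        ((mul_nonneg (pow_nonneg (jap_nonneg 0) _) (norm_nonneg _)).trans (hB 0))
  refine Summable.of_nonneg_of_le (fun _ => norm_nonneg _) (fun q => ?_) h1
  rw [gamTerm, norm_mul, norm_mul]
  refine mul_le_mul_of_nonneg_left ?_ (norm_nonneg _)
  exact mul_le_mul (norm_symbol_le _ _ _) ((norm_symbol_le _ _ _).trans (hB _))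
    (norm_nonneg _) (mul_nonneg (pow_nonneg (jap_nonneg _) _) (norm_nonneg _))

/-- The contribution of the resonant set `k₁ + ⋯ + k_n = 0` factorizes. -/
theorem tsum_resonant_gamTerm (he : ∀ i, e i ≤ 3) (hf : SmoothPer f) (hg : SmoothPer g) :
    ∑' q, (if ∑ i, q.1 i = 0 then gamTerm s n e f g q else 0) =
      (∑' k : Fin n → ℤ, if ∑ i, k i = 0 then
        ∏ i, ((Complex.I * (k i : ℂ)) ^ e i * fhat (cF f) (k i)) else 0) *
        ((dxNormSq (s + 1) (cF g) : ℝ) : ℂ) := by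
  have h1 : Summable fun k : Fin n → ℤ => ‖if ∑ i, k i = 0 then
      ∏ i, ((Complex.I * (k i : ℂ)) ^ e i * fhat (cF f) (k i)) else 0‖ := by
    refine Summable.of_nonneg_of_le (fun _ => norm_nonneg _) (fun k => ?_)
      (summable_norm_prod_symbol n he hf)
    split_ifs
    · exact le_rfl
    · rw [norm_zero]
      exact norm_nonneg _
  have h2 : Summable fun l : ℤ => ‖(((l : ℝ) ^ (2 * (s + 1)) * ‖fhat (cF g) l‖ ^ 2 : ℝ) : ℂ)‖ := by
    refine Summable.of_nonneg_of_le (fun _ => norm_nonneg _) (fun l => ?_)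
      (summable_jap_pow_fhat_sq hg (s + 1))
    rw [Complex.norm_real, Real.norm_of_nonneg (by rw [pow_mul]; positivity), pow_mul]
    exact mul_le_mul_of_nonneg_right
      (pow_le_pow_left₀ (sq_nonneg _) (by linarith) _) (sq_nonneg _)
  rw [dxNormSq, Complex.ofReal_tsum, tsum_mul_tsum_of_summable_norm h1 h2]
  congr 1
  funext q
  split_ifs with h
  · rw [gamTerm, h]
    congr 1
    rw [show -(0 : ℤ) - q.2 = -q.2 by ring, fhat_neg]
    push_cast
    rw [← Complex.mul_conj']
    have : (Complex.I * (q.2 : ℂ)) ^ (s + 1) * (Complex.I * (-(q.2 : ℂ))) ^ (s + 1) =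
        (q.2 : ℂ) ^ (2 * (s + 1)) := by
      rw [← mul_pow, pow_mul]
      congr 1
      linear_combination -(q.2 : ℂ) ^ 2 * Complex.I_sq
    rw [← this]
    ring
  · simp

theorem lossWeight_nonneg (m : Fin n) (k : Fin n → ℤ) : 0 ≤ lossWeight n f m k :=
  Finset.prod_nonneg fun _ _ => mul_nonneg (pow_nonneg (jap_nonneg _) _) (norm_nonneg _)

theorem jap_pow_mul_prod (m : Fin n) (k : Fin n → ℤ) :
    jap (k m) ^ 3 * ∏ i, (jap (k i) ^ 3 * ‖fhat (cF f) (k i)‖) = lossWeight n f m k := by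
  rw [lossWeight, ← Finset.mul_prod_erase Finset.univ _ (Finset.mem_univ m),
    ← Finset.mul_prod_erase Finset.univ
      (fun i => jap (k i) ^ (if i = m then 6 else 3) * ‖fhat (cF f) (k i)‖) (Finset.mem_univ m),
    if_pos rfl, ← mul_assoc, ← mul_assoc, ← pow_add]
  congr 1
  refine Finset.prod_congr rfl fun i hi => ?_
  rw [if_neg (Finset.ne_of_mem_erase hi)]

/-- On the low-frequency region the two derivatives in excess on `g` are moved to `f`. -/
theorem norm_gamTerm_le (he : ∀ i, e i ≤ 3) (C₀ : ℝ) (hC₀ : 0 < C₀) (q : (Fin n → ℤ) × ℤ)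
    (hq : ∑ i, q.1 i ≠ 0) (hlow : MH C₀ (n + 1) (zeroSumEquiv n q).1 ≠ 1) :
    ‖gamTerm s n e f g q‖ ≤ (n + C₀ ^ ((5:ℝ)/4)) ^ 2 * ((∑ m, lossWeight n f m q.1) *
      (((1 + (q.2 : ℝ) ^ 2) ^ s * ‖fhat (cF g) q.2‖ ^ 2 +
        (1 + ((-(∑ i, q.1 i) - q.2 : ℤ) : ℝ) ^ 2) ^ s *
          ‖fhat (cF g) (-(∑ i, q.1 i) - q.2)‖ ^ 2) / 2)) := by
  obtain ⟨k, l⟩ := q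
  simp only at hq ⊢
  have : Nonempty (Fin n) := by
    by_contra hne
    rw [not_nonempty_iff] at hne
    exact hq (by simp)
  obtain ⟨m, hm⟩ := Finite.exists_max fun i => |(k i : ℝ)|
  have hmin := min_lt_of_MH_ne_one hC₀ n (k, l) m hm hlow
  have hprod := abs_mul_abs_le_of_not_high C₀ hC₀ k l _ rfl hq m hm hmin
  rw [gamTerm, norm_mul, norm_mul, norm_symbol, norm_symbol]
  simp only
  generalize (-(∑ i, k i) - l) = l' at hprod ⊢
  set Cn : ℝ := (n + C₀ ^ ((5:ℝ)/4)) ^ 2 with hCn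
  have hCn0 : 0 ≤ Cn := sq_nonneg _
  have hw : ∀ y : ℤ, (|(y : ℝ)| ^ s * ‖fhat (cF g) y‖) ^ 2 ≤
      (1 + (y : ℝ) ^ 2) ^ s * ‖fhat (cF g) y‖ ^ 2 := fun y => by
    rw [mul_pow, ← pow_mul, mul_comm s 2, pow_mul, sq_abs]
    exact mul_le_mul_of_nonneg_right
      (pow_le_pow_left₀ (sq_nonneg _) (by linarith) _) (sq_nonneg _)
  set u := |(l : ℝ)| ^ s * ‖fhat (cF g) l‖
  set v := |(l' : ℝ)| ^ s * ‖fhat (cF g) l'‖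
  have huv : u * v ≤ ((1 + (l : ℝ) ^ 2) ^ s * ‖fhat (cF g) l‖ ^ 2 +
      (1 + (l' : ℝ) ^ 2) ^ s * ‖fhat (cF g) l'‖ ^ 2) / 2 := by
    nlinarith [hw l, hw l', sq_nonneg (u - v)]
  have hu0 : 0 ≤ u := by positivity
  have hv0 : 0 ≤ v := by positivity
  have hl : |(l : ℝ)| * |(l' : ℝ)| ≤ Cn * jap (k m) ^ 3 :=
    hprod.trans (mul_le_mul_of_nonneg_left
      (pow_le_pow_left₀ (abs_nonneg _) (abs_le_jap _) 3) hCn0)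
  have hJ : 0 ≤ jap (k m) ^ 3 := pow_nonneg (jap_nonneg _) _
  calc _ = ‖∏ i, ((Complex.I * (k i : ℂ)) ^ e i * fhat (cF f) (k i))‖ *
        ((|(l : ℝ)| * |(l' : ℝ)|) * (u * v)) := by ring
    _ ≤ (∏ i, (jap (k i) ^ 3 * ‖fhat (cF f) (k i)‖)) * ((Cn * jap (k m) ^ 3) * (u * v)) := by
      refine mul_le_mul (norm_prod_symbol_le n he k) ?_ (by positivity)
        ((norm_nonneg _).trans (norm_prod_symbol_le n he k))
      exact mul_le_mul_of_nonneg_right hl (by positivity)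
    _ = Cn * (lossWeight n f m k * (u * v)) := by
      rw [← jap_pow_mul_prod]
      ring
    _ ≤ _ := by
      refine mul_le_mul_of_nonneg_left ?_ hCn0
      refine mul_le_mul ?_ huv (by positivity)
        (Finset.sum_nonneg fun m _ => lossWeight_nonneg n m k)
      exact Finset.single_le_sum (f := fun m => lossWeight n f m k)
        (fun m _ => lossWeight_nonneg n m k) (Finset.mem_univ m)

theorem hasSum_lossWeight (hf : SmoothPer f) (m : Fin n) :
    HasSum (lossWeight n f m) (∏ i, ∑' k, jap k ^ (if i = m then 6 else 3) * ‖fhat (cF f) k‖) :=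
  (hasSum_pi_prod n (fun i k => jap k ^ (if i = m then 6 else 3) * ‖fhat (cF f) k‖) fun _ =>
    (summable_jap_pow_fhat hf _).norm).2

theorem prod_tsum_le (hf : SmoothPer f) (m : Fin n) :
    ∏ i, ∑' k, jap k ^ (if i = m then 6 else 3) * ‖fhat (cF f) k‖ ≤
      Real.sqrt (∑' k, (jap k ^ 2)⁻¹) ^ n *
        (hsNormC 4 (cF f) ^ (n - 1) * hsNormC 7 (cF f)) := by
  calc _ ≤ ∏ i, (Real.sqrt (∑' k, (jap k ^ 2)⁻¹) *
        hsNormC ((if i = m then 6 else 3) + 1) (cF f)) :=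
        Finset.prod_le_prod (fun i _ => tsum_nonneg fun k =>
          mul_nonneg (pow_nonneg (jap_nonneg _) _) (norm_nonneg _))
          fun i _ => tsum_jap_pow_fhat_le hf _
    _ = _ := by
      rw [Finset.prod_mul_distrib, Finset.prod_const, Finset.card_univ, Fintype.card_fin,
        ← Finset.mul_prod_erase Finset.univ _ (Finset.mem_univ m), if_pos rfl,
        Finset.prod_congr rfl (g := fun _ => hsNormC 4 (cF f)) fun i hi => by
          rw [if_neg (Finset.ne_of_mem_erase hi)],
        Finset.prod_const, Finset.card_erase_of_mem (Finset.mem_univ m), Finset.card_univ,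
        Fintype.card_fin, mul_comm (hsNormC _ _)]

/-- The non-resonant low-frequency part is bounded. -/
theorem norm_gamTerm_remainder_le (he : ∀ i, e i ≤ 3) (C₀ : ℝ) (hC₀ : 0 < C₀)
    (hf : SmoothPer f) (hg : SmoothPer g) :
    ‖∑' q, gamTerm s n e f g q - ∑' q, (if ∑ i, q.1 i = 0 then gamTerm s n e f g q else 0) -
      ∑' q, gamTerm s n e f g q * MH C₀ (n + 1) (zeroSumEquiv n q).1 *
        MNZ (n + 1) (zeroSumEquiv n q).1‖ ≤
      (n + C₀ ^ ((5:ℝ)/4)) ^ 2 * n * Real.sqrt (∑' k, (jap k ^ 2)⁻¹) ^ n *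
        (hsNormC 4 (cF f) ^ (n - 1) * hsNormC 7 (cF f) * hsNormC s (cF g) ^ 2) := by
  have hs := summable_norm_gamTerm s n he hf hg
  have hs0 : Summable fun q : (Fin n → ℤ) × ℤ =>
      if ∑ i, q.1 i = 0 then gamTerm s n e f g q else 0 := by
    refine Summable.of_norm_bounded hs fun q => ?_
    split_ifs <;> simp
  have hs1 : Summable fun q : (Fin n → ℤ) × ℤ =>
      gamTerm s n e f g q * MH C₀ (n + 1) (zeroSumEquiv n q).1 *
        MNZ (n + 1) (zeroSumEquiv n q).1 := by
    refine Summable.of_norm_bounded hs fun q => ?_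
    rw [MNZ]
    rcases MH_eq_zero_or_one C₀ (n + 1) (zeroSumEquiv n q).1 with h | h <;> rw [h] <;>
      split_ifs <;> simp
  rw [← hs.of_norm.tsum_sub hs0, ← (hs.of_norm.sub hs0).tsum_sub hs1]
  have hsum := ((hasSum_bilinear (n := n) (Q := fun k => ∑ m, lossWeight n f m k)
    (G := fun l => (1 + (l : ℝ) ^ 2) ^ s * ‖fhat (cF g) l‖ ^ 2)
    (fun k => Finset.sum_nonneg fun m _ => lossWeight_nonneg n m k) (fun l => by positivity)
    (hasSum_sum fun m _ => hasSum_lossWeight n hf m)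
    (summable_jap_pow_fhat_sq hg s).hasSum).mul_left ((n + C₀ ^ ((5:ℝ)/4)) ^ 2))
  refine (tsum_of_norm_bounded hsum fun q => ?_).trans ?_
  · have h0 : 0 ≤ (n + C₀ ^ ((5:ℝ)/4)) ^ 2 * ((∑ m, lossWeight n f m q.1) *
      (((1 + (q.2 : ℝ) ^ 2) ^ s * ‖fhat (cF g) q.2‖ ^ 2 +
        (1 + ((-(∑ i, q.1 i) - q.2 : ℤ) : ℝ) ^ 2) ^ s *
          ‖fhat (cF g) (-(∑ i, q.1 i) - q.2)‖ ^ 2) / 2)) :=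
      mul_nonneg (sq_nonneg _) (mul_nonneg
        (Finset.sum_nonneg fun m _ => lossWeight_nonneg n m q.1) (by positivity))
    rw [MNZ, ksum1_zeroSumEquiv]
    by_cases hq : ∑ i, q.1 i = 0
    · simpa [hq] using h0
    · rcases MH_eq_zero_or_one C₀ (n + 1) (zeroSumEquiv n q).1 with h | h
      · have := norm_gamTerm_le (g := g) (f := f) s n he C₀ hC₀ q hq (by rw [h]; exact zero_ne_one)
        simpa [hq, h] using this
      · simpa [hq, h] using h0
  · have hG : ∑' l : ℤ, (1 + (l : ℝ) ^ 2) ^ s * ‖fhat (cF g) l‖ ^ 2 = hsNormC s (cF g) ^ 2 :=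
      (Real.sq_sqrt (tsum_nonneg fun l => by positivity)).symm
    have hP := Finset.sum_le_sum fun m (_ : m ∈ Finset.univ) => prod_tsum_le n hf m
    rw [Finset.sum_const, Finset.card_univ, Fintype.card_fin, nsmul_eq_mul] at hP
    rw [hG]
    refine (mul_le_mul_of_nonneg_left (mul_le_mul_of_nonneg_right hP (sq_nonneg _))
      (sq_nonneg _)).trans_eq ?_
    ring

end terms

/-- **Lemma lem_ga23 (first estimate).** For real-valued smooth `2π`-periodic `f, g` and
`M_{2,*} = λ_j b_j (ik_{p_j})^{s+1}(ik_{p_j+1})^{s+1}D_{a_j,b_j-1,c_j}M_H M_NZ`: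
`|Γ^{(p_j)}(λ_j b_j (ik_{p_j})^{s+1}(ik_{p_j+1})^{s+1}D_{a_j,b_j-1,c_j}; f,…,f,g,g)
  − P_{N_j}(f)‖∂_x^{s+1}g‖_{L²}² − Γ^{(p_j)}(M_{2,*}; f,…,f,g,g)|
  ≲ ‖f‖_{H⁴}^{p_j−2} ‖f‖_{H⁷} ‖g‖_{H^s}²`. -/
theorem lem_ga23_first (s : ℕ) (lam : ℝ) (a b c d : ℕ) (p : ℕ) (hpdef : p = a + b + c + d)
    (hp2 : 2 ≤ p) (hb : 1 ≤ b) (C₀ : ℝ) (hC₀ : 0 < C₀) :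
    ∃ C : ℝ, 0 < C ∧ ∀ f g : ℝ → ℝ,
      ContDiff ℝ (⊤ : ℕ∞) f → Function.Periodic f (2 * Real.pi) →
      ContDiff ℝ (⊤ : ℕ∞) g → Function.Periodic g (2 * Real.pi) →
      ‖Gam p (fun k => (lam : ℂ) * (b : ℂ)
            * (Complex.I * (k (⟨p - 1, by omega⟩ : Fin (p + 1)) : ℂ)) ^ (s + 1)
            * (Complex.I * (k (Fin.last p) : ℂ)) ^ (s + 1)
            * Dabc p a (b - 1) c k)
          (tup p (cF f) (cF g))
        - ((PNj lam a b c d f * dxNormSq (s + 1) (cF g) : ℝ) : ℂ)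
        - Gam p (fun k => (lam : ℂ) * (b : ℂ)
            * (Complex.I * (k (⟨p - 1, by omega⟩ : Fin (p + 1)) : ℂ)) ^ (s + 1)
            * (Complex.I * (k (Fin.last p) : ℂ)) ^ (s + 1)
            * Dabc p a (b - 1) c k * MH C₀ p k * MNZ p k)
          (tup p (cF f) (cF g))‖
      ≤ C * hsNormC 4 (cF f) ^ (p - 2) * hsNormC 7 (cF f) * hsNormC s (cF g) ^ 2 := by
  obtain ⟨n, rfl⟩ : ∃ n, p = n + 1 := ⟨p - 1, by omega⟩
  set K : ℝ := (n + C₀ ^ ((5:ℝ)/4)) ^ 2 * n * Real.sqrt (∑' k, (jap k ^ 2)⁻¹) ^ n with hK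
  have hK0 : 0 ≤ K := by positivity
  refine ⟨|lam| * b * K + 1, by positivity, fun f g hf hfp hg hgp => ?_⟩
  have hf : SmoothPer f := ⟨hf, hfp⟩
  have hg : SmoothPer g := ⟨hg, hgp⟩
  set e : Fin n → ℕ := fun i => derivOrder a (b - 1) c i with he_def
  have he : ∀ i, e i ≤ 3 := fun i => derivOrder_le _ _ _ _
  have hpen : ∀ q, (zeroSumEquiv n q).1 ⟨n + 1 - 1, by omega⟩ = q.2 :=
    zeroSumEquiv_penultimate n
  have hterm : ∀ q : (Fin n → ℤ) × ℤ, (lam : ℂ) * (b : ℂ)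
      * (Complex.I * ((zeroSumEquiv n q).1 ⟨n + 1 - 1, by omega⟩ : ℂ)) ^ (s + 1)
      * (Complex.I * ((zeroSumEquiv n q).1 (Fin.last (n + 1)) : ℂ)) ^ (s + 1)
      * Dabc (n + 1) a (b - 1) c (zeroSumEquiv n q).1 *
      ((∏ i, fhat (cF f) (q.1 i)) * (fhat (cF g) q.2 * fhat (cF g) (-(∑ i, q.1 i) - q.2))) =
      lam * b * gamTerm s n e f g q := fun q => by
    rw [hpen, zeroSumEquiv_last, Dabc_eq_prod n a (b - 1) c (by omega), gamTerm,
      Finset.prod_mul_distrib]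
    simp only [zeroSumEquiv_castSucc, he_def]
    ring
  have h1 := Gam_eq_tsum n (fun k => (lam : ℂ) * (b : ℂ)
      * (Complex.I * (k (⟨n + 1 - 1, by omega⟩ : Fin (n + 1 + 1)) : ℂ)) ^ (s + 1)
      * (Complex.I * (k (Fin.last (n + 1)) : ℂ)) ^ (s + 1)
      * Dabc (n + 1) a (b - 1) c k) (cF f) (cF g)
  simp only [hterm] at h1
  have h2 := Gam_eq_tsum n (fun k => (lam : ℂ) * (b : ℂ)
      * (Complex.I * (k (⟨n + 1 - 1, by omega⟩ : Fin (n + 1 + 1)) : ℂ)) ^ (s + 1)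
      * (Complex.I * (k (Fin.last (n + 1)) : ℂ)) ^ (s + 1)
      * Dabc (n + 1) a (b - 1) c k * MH C₀ (n + 1) k * MNZ (n + 1) k) (cF f) (cF g)
  have hterm2 : ∀ q : (Fin n → ℤ) × ℤ, (lam : ℂ) * (b : ℂ)
      * (Complex.I * ((zeroSumEquiv n q).1 ⟨n + 1 - 1, by omega⟩ : ℂ)) ^ (s + 1)
      * (Complex.I * ((zeroSumEquiv n q).1 (Fin.last (n + 1)) : ℂ)) ^ (s + 1)
      * Dabc (n + 1) a (b - 1) c (zeroSumEquiv n q).1 *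
      MH C₀ (n + 1) (zeroSumEquiv n q).1 * MNZ (n + 1) (zeroSumEquiv n q).1 *
      ((∏ i, fhat (cF f) (q.1 i)) * (fhat (cF g) q.2 * fhat (cF g) (-(∑ i, q.1 i) - q.2))) =
      lam * b * (gamTerm s n e f g q * MH C₀ (n + 1) (zeroSumEquiv n q).1 *
        MNZ (n + 1) (zeroSumEquiv n q).1) := fun q => by
    linear_combination MH C₀ (n + 1) (zeroSumEquiv n q).1 * MNZ (n + 1) (zeroSumEquiv n q).1 *
      hterm q
  simp only [hterm2] at h2
  rw [h1, h2, Complex.ofReal_mul, PNj_eq_tsum hf lam a b c d n (by omega), mul_assoc (lam * b : ℂ),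
    ← tsum_resonant_gamTerm s n he hf hg, tsum_mul_left, tsum_mul_left, ← mul_sub, ← mul_sub,
    norm_mul]
  have hnorm : ‖(lam * b : ℂ)‖ = |lam| * b := by simp
  rw [hnorm]
  have hN : 0 ≤ hsNormC 4 (cF f) ^ (n - 1) * hsNormC 7 (cF f) * hsNormC s (cF g) ^ 2 :=
    mul_nonneg (mul_nonneg (pow_nonneg (hsNormC_nonneg _ _) _) (hsNormC_nonneg _ _))
      (sq_nonneg _)
  calc _ ≤ |lam| * b * (K * (hsNormC 4 (cF f) ^ (n - 1) * hsNormC 7 (cF f) *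
        hsNormC s (cF g) ^ 2)) :=
        mul_le_mul_of_nonneg_left (norm_gamTerm_remainder_le s n he C₀ hC₀ hf hg) (by positivity)
    _ ≤ (|lam| * b * K + 1) * (hsNormC 4 (cF f) ^ (n - 1) * hsNormC 7 (cF f) *
        hsNormC s (cF g) ^ 2) := by
      rw [← mul_assoc]
      exact mul_le_mul_of_nonneg_right (by linarith) hN
    _ = _ := by
      rw [show n + 1 - 2 = n - 1 by omega]
      ring

end FifthOrderStmt17
end
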